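/- Let n ≥ 1, α > 0 and 1 < q ≤ 1 + α/n. Suppose the coefficients a_{ij} satisfy condition (8) with this α and some c > 0. Let u and v be functions continuous on [0,∞) × ℝⁿ and C¹ on S with |u|^q, |v|^q locally integrable, such that u is an entire weak solution on S of u_t ≥ Lu + |u|^{q−1}u (with arbitrary initial data u(0,·)) and v is an entire weak solution on S of v_t ≤ Lv + |v|^{q−1}v (with arbitrary initial data v(0,·)), and u ≥ v on S. Then u = v in S. -/

import Mathlib

open MeasureTheory Real

noncomputable section

/-- Euclidean space ℝⁿ. -/
abbrev Xn (n : ℕ) : Type := EuclideanSpace ℝ (Fin n)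

/-- Points of the half-space `S = (0,∞) × ℝⁿ`. -/
abbrev Pt (n : ℕ) : Type := ℝ × Xn n

/-- The half-space `S = (0,∞) × ℝⁿ`. -/
def halfSpace (n : ℕ) : Set (Pt n) := {p | 0 < p.1}

/-- Partial derivative in the time variable. -/
noncomputable def pdT {n : ℕ} (w : Pt n → ℝ) (p : Pt n) : ℝ :=
  fderiv ℝ w p (1, 0)

/-- Partial derivative in the space variable `x_j`. -/
noncomputable def pdX {n : ℕ} (w : Pt n → ℝ) (j : Fin n) (p : Pt n) : ℝ :=
  fderiv ℝ w p (0, EuclideanSpace.single j 1)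

/-- The odd power function `x ↦ |x|^{q-1} x`. -/
noncomputable def oddPow (q x : ℝ) : ℝ := |x| ^ (q - 1) * x

/-- Condition (8): `𝒜(R) ≤ c R^{2-α}` for all `R > 1`, expressed as an a.e. bound
on the majorant `A` over the region `{(t,x) : t > 0, R/2 < |x| < R}`. -/
def Cond8 {n : ℕ} (A : Pt n → ℝ) (α c : ℝ) : Prop :=
  ∀ R : ℝ, 1 < R →
    ∀ᵐ p ∂(volume.restrict
        {p : Pt n | 0 < p.1 ∧ R / 2 < ‖p.2‖ ∧ ‖p.2‖ < R}),
      A p ≤ c * R ^ (2 - α)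

/-- `u` is an entire weak solution of `u_t ≥ Lu + |u|^{q−1}u` in `S`. -/
def WeakSuperSol {n : ℕ} (a : Fin n → Fin n → Pt n → ℝ) (q : ℝ)
    (u : Pt n → ℝ) : Prop :=
  ∀ φ : Pt n → ℝ, ContDiff ℝ (⊤ : ℕ∞) φ → HasCompactSupport φ →
    tsupport φ ⊆ halfSpace n → (∀ p, 0 ≤ φ p) →
    0 ≤ ∫ p in halfSpace n,
        (pdT u p * φ p + ∑ i, ∑ j, a i j p * pdX φ i p * pdX u j p
          - oddPow q (u p) * φ p)

/-- `v` is an entire weak solution of `v_t ≤ Lv + |v|^{q−1}v` in `S`. -/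
def WeakSubSol {n : ℕ} (a : Fin n → Fin n → Pt n → ℝ) (q : ℝ)
    (v : Pt n → ℝ) : Prop :=
  ∀ φ : Pt n → ℝ, ContDiff ℝ (⊤ : ℕ∞) φ → HasCompactSupport φ →
    tsupport φ ⊆ halfSpace n → (∀ p, 0 ≤ φ p) →
    ∫ p in halfSpace n,
        (pdT v p * φ p + ∑ i, ∑ j, a i j p * pdX φ i p * pdX v j p
          - oddPow q (v p) * φ p) ≤ 0

/-!
The difference `w = u - v` is a nonnegative supersolution of `w_t ≥ Lw + 2 ^ (1 - q) w ^ q`, since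
`oddPow q u - oddPow q v ≥ 2 ^ (1 - q) (u - v) ^ q` for `v ≤ u`. Test this with
`(w + d) ^ (-ν) ψ`, where `ψ` is a power of a cutoff and `ν` is small, to control the energy of `w`,
and then with `ψ` itself to control the mass of `w ^ q`; Young's inequality absorbs the remaining
terms. For cutoffs living on `{t ≤ R ^ α, |x| ≤ R}`, condition (8) makes all the errors of size
`R ^ (-α)`, and the resulting bound for `∫ w ^ q ψ` is a multiple of
`(R ^ (-α)) ^ (q / (q - 1)) * R ^ (α + n)`, which is bounded because `n (q - 1) ≤ α`.
Hence `w ^ q` is integrable. A second pass with the same cutoffs bounds `∫ w ^ q` by an arbitrarily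
small constant plus a multiple of the integral of `w ^ q` off the core of the cutoff, and the latter
tends to zero, so `w = 0`. The part of the cutoff near `t = 0` increases in time, so its derivative
enters with the favourable sign, and this is why the initial data do not matter.
-/

lemma isOpen_halfSpace (n : ℕ) : IsOpen (halfSpace n) :=
  isOpen_lt continuous_const continuous_fst

lemma measurableSet_halfSpace (n : ℕ) : MeasurableSet (halfSpace n) :=
  (isOpen_halfSpace n).measurableSet

lemma nonneg_of_forall_pos_add_mul {a b : ℝ} (h : ∀ ε > 0, 0 ≤ a + ε * b) : 0 ≤ a := by
  have hlim : Filter.Tendsto (fun ε : ℝ => a + ε * b) (nhdsWithin 0 (Set.Ioi 0)) (nhds a) := by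
    have hcont : Continuous fun ε : ℝ => a + ε * b := by fun_prop
    simpa using (hcont.tendsto 0).mono_left nhdsWithin_le_nhds
  exact ge_of_tendsto hlim (eventually_nhdsWithin_of_forall h)

/-! ### Locally bounded measurable functions -/

/-- `F` is measurable on `U` and bounded on every compact subset of `U`: the class to which all
integrands below belong. -/
structure LocallyBoundedOn {X : Type*} [TopologicalSpace X] [MeasurableSpace X]
    (F : X → ℝ) (U : Set X) (μ : Measure X) : Prop where
  aestronglyMeasurable : AEStronglyMeasurable F (μ.restrict U)
  bounded : ∀ K : Set X, IsCompact K → K ⊆ U → ∃ M, ∀ p ∈ K, |F p| ≤ M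

namespace LocallyBoundedOn

variable {X : Type*} [TopologicalSpace X] [MeasurableSpace X] {F G : X → ℝ} {U K : Set X}
  {μ : Measure X}

lemma add (hF : LocallyBoundedOn F U μ) (hG : LocallyBoundedOn G U μ) :
    LocallyBoundedOn (fun p => F p + G p) U μ := by
  refine ⟨hF.1.add hG.1, fun K hK hKU => ?_⟩
  obtain ⟨M, hM⟩ := hF.2 K hK hKU
  obtain ⟨M', hM'⟩ := hG.2 K hK hKU
  exact ⟨M + M', fun p hp => (abs_add_le _ _).trans (add_le_add (hM p hp) (hM' p hp))⟩

lemma mul (hF : LocallyBoundedOn F U μ) (hG : LocallyBoundedOn G U μ) :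
    LocallyBoundedOn (fun p => F p * G p) U μ := by
  refine ⟨hF.1.mul hG.1, fun K hK hKU => ?_⟩
  obtain ⟨M, hM⟩ := hF.2 K hK hKU
  obtain ⟨M', hM'⟩ := hG.2 K hK hKU
  refine ⟨M * M', fun p hp => ?_⟩
  rw [abs_mul]
  exact mul_le_mul (hM p hp) (hM' p hp) (abs_nonneg _) ((abs_nonneg _).trans (hM p hp))

lemma const (c : ℝ) : LocallyBoundedOn (fun _ => c) U μ :=
  ⟨aestronglyMeasurable_const, fun _ _ _ => ⟨|c|, fun _ _ => le_rfl⟩⟩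

lemma neg (hF : LocallyBoundedOn F U μ) : LocallyBoundedOn (fun p => -F p) U μ := by
  simpa using (const (-1)).mul hF

lemma sub (hF : LocallyBoundedOn F U μ) (hG : LocallyBoundedOn G U μ) :
    LocallyBoundedOn (fun p => F p - G p) U μ := by
  simpa [sub_eq_add_neg] using hF.add hG.neg

lemma abs (hF : LocallyBoundedOn F U μ) : LocallyBoundedOn (fun p => |F p|) U μ :=
  ⟨hF.1.norm, by simpa only [abs_abs] using hF.2⟩

lemma indicator (hF : LocallyBoundedOn F U μ) (hK : MeasurableSet K) :
    LocallyBoundedOn (K.indicator F) U μ := by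
  refine ⟨hF.1.indicator hK, fun L hL hLU => ?_⟩
  obtain ⟨M, hM⟩ := hF.2 L hL hLU
  exact ⟨M, fun p hp => (norm_indicator_le_norm_self F p).trans (hM p hp)⟩

lemma sum {ι : Type*} (s : Finset ι) {F : ι → X → ℝ} (hF : ∀ i, LocallyBoundedOn (F i) U μ) :
    LocallyBoundedOn (fun p => ∑ i ∈ s, F i p) U μ := by
  classical
  induction s using Finset.induction_on with
  | empty => simpa using const 0
  | insert i s hi ih => simpa [Finset.sum_insert hi] using (hF i).add ih

variable [OpensMeasurableSpace X]

lemma of_continuousOn [SecondCountableTopologyEither X ℝ] (hF : ContinuousOn F U)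
    (hU : MeasurableSet U) : LocallyBoundedOn F U μ := by
  refine ⟨hF.aestronglyMeasurable hU, fun K hK hKU => ?_⟩
  obtain ⟨M, hM⟩ := hK.exists_bound_of_continuousOn (hF.mono hKU)
  exact ⟨M, hM⟩

lemma integrableOn [T2Space X] [IsFiniteMeasureOnCompacts μ] (hF : LocallyBoundedOn F U μ)
    (hK : IsCompact K) (hKU : K ⊆ U) (h0 : ∀ p ∉ K, F p = 0) : IntegrableOn F U μ := by
  obtain ⟨M, hM⟩ := hF.2 K hK hKU
  have hFK : IntegrableOn F K (μ.restrict U) := by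
    refine Measure.integrableOn_of_bounded (M := M) ?_ hF.1 ?_
    · exact ((Measure.restrict_apply_le _ _).trans_lt hK.measure_lt_top).ne
    · exact (ae_restrict_iff' hK.measurableSet).mpr (Filter.Eventually.of_forall hM)
  exact (integrableOn_iff_integrable_of_support_subset
    (Function.support_subset_iff'.mpr h0)).mp hFK

end LocallyBoundedOn

/-! ### Test functions -/

section TestFunctions

variable {E : Type*} [NormedAddCommGroup E] [NormedSpace ℝ E]

/-- Nonnegative test functions of class `C^k` on `U`. -/
structure IsTestFunction (k : ℕ∞) (U : Set E) (φ : E → ℝ) : Prop where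
  contDiff : ContDiff ℝ k φ
  hasCompactSupport : HasCompactSupport φ
  tsupport_subset : tsupport φ ⊆ U
  nonneg : ∀ p, 0 ≤ φ p

/-- The pairing of the test function `φ` with `B₀ - ∑ i, ∂_{e i} (B i)`, in weak form. -/
def weakPairing {ι : Type*} [Fintype ι] (e : ι → E) (B₀ : E → ℝ) (B : ι → E → ℝ) (φ : E → ℝ)
    (p : E) : ℝ :=
  B₀ p * φ p + ∑ i, B i p * fderiv ℝ φ p (e i)

lemma weakPairing_of_notMem_tsupport {ι : Type*} [Fintype ι] (e : ι → E) (B₀ : E → ℝ)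
    (B : ι → E → ℝ) {φ : E → ℝ} {p : E} (hp : p ∉ tsupport φ) : weakPairing e B₀ B φ p = 0 := by
  simp [weakPairing, image_eq_zero_of_notMem_tsupport hp, fderiv_of_notMem_tsupport (𝕜 := ℝ) hp]

lemma abs_weakPairing_sub_le {ι : Type*} [Fintype ι] {e : ι → E} {B₀ : E → ℝ} {B : ι → E → ℝ}
    {φ ψ : E → ℝ} {p : E} {ε : ℝ} (h₀ : |ψ p - φ p| ≤ ε)
    (h₁ : ‖fderiv ℝ ψ p - fderiv ℝ φ p‖ ≤ ε) :
    |weakPairing e B₀ B ψ p - weakPairing e B₀ B φ p| ≤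
      ε * (|B₀ p| + ∑ i, |B i p| * ‖e i‖) := by
  have hsplit : weakPairing e B₀ B ψ p - weakPairing e B₀ B φ p =
      B₀ p * (ψ p - φ p) + ∑ i, B i p * (fderiv ℝ ψ p - fderiv ℝ φ p) (e i) := by
    simp only [weakPairing, sub_apply, mul_sub, Finset.sum_sub_distrib]
    ring
  have hterm (i : ι) : |B i p * (fderiv ℝ ψ p - fderiv ℝ φ p) (e i)| ≤ |B i p| * (ε * ‖e i‖) := by
    rw [abs_mul]
    gcongr
    exact (fderiv ℝ ψ p - fderiv ℝ φ p).le_of_opNorm_le h₁ (e i)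
  calc |weakPairing e B₀ B ψ p - weakPairing e B₀ B φ p|
      ≤ |B₀ p| * |ψ p - φ p| + ∑ i, |B i p * (fderiv ℝ ψ p - fderiv ℝ φ p) (e i)| := by
        rw [hsplit, ← abs_mul]
        exact (abs_add_le _ _).trans (add_le_add_right (Finset.abs_sum_le_sum_abs _ _) _)
    _ ≤ |B₀ p| * ε + ∑ i, |B i p| * (ε * ‖e i‖) := by
        gcongr with i
        exact hterm i
    _ = ε * (|B₀ p| + ∑ i, |B i p| * ‖e i‖) := by
        rw [mul_add, Finset.mul_sum, mul_comm ε]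
        congr 1
        exact Finset.sum_congr rfl fun i _ => by ring

open scoped Convolution in
lemma exists_contDiff_dist_le_of_hasCompactSupport [FiniteDimensional ℝ E] {φ : E → ℝ}
    (hφ : ContDiff ℝ 1 φ) (hc : HasCompactSupport φ) (h0 : ∀ p, 0 ≤ φ p)
    {ε δ : ℝ} (hε : 0 < ε) (hδ : 0 < δ) :
    ∃ ψ : E → ℝ, ContDiff ℝ (⊤ : ℕ∞) ψ ∧ (∀ p, 0 ≤ ψ p) ∧
      tsupport ψ ⊆ Metric.cthickening δ (tsupport φ) ∧
      (∀ p, |ψ p - φ p| ≤ ε) ∧ ∀ p, ‖fderiv ℝ ψ p - fderiv ℝ φ p‖ ≤ ε := by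
  borelize E
  let μ : Measure E := Measure.addHaar
  let L := ContinuousLinearMap.lsmul ℝ ℝ (E := ℝ)
  have hdφ : Continuous (fderiv ℝ φ) := hφ.continuous_fderiv one_ne_zero
  obtain ⟨r₁, hr₁, hφr₁⟩ := Metric.uniformContinuous_iff.mp
    (hc.uniformContinuous_of_continuous hφ.continuous) ε hε
  obtain ⟨r₂, hr₂, hφr₂⟩ := Metric.uniformContinuous_iff.mp
    ((hc.fderiv ℝ).uniformContinuous_of_continuous hdφ) ε hε
  obtain ⟨r, hr, hrδ, hrr₁, hrr₂⟩ : ∃ r, 0 < r ∧ r ≤ δ ∧ r ≤ r₁ ∧ r ≤ r₂ :=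
    ⟨min δ (min r₁ r₂), by positivity, by simp, by simp, by simp⟩
  let b : ContDiffBump (0 : E) := ⟨r / 2, r, by positivity, by linarith⟩
  have hfderiv (p : E) : fderiv ℝ (b.normed μ ⋆[L, μ] φ) p =
      (b.normed μ ⋆[ContinuousLinearMap.lsmul ℝ ℝ, μ] fderiv ℝ φ) p :=
    (hc.hasFDerivAt_convolution_right L b.continuous_normed.locallyIntegrable hφ p).fderiv
  refine ⟨b.normed μ ⋆[L, μ] φ, ?_, fun p => ?_, ?_, fun p => ?_, fun p => ?_⟩
  · exact b.hasCompactSupport_normed.contDiff_convolution_left _ b.contDiff_normed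
      hφ.continuous.locallyIntegrable
  · exact integral_nonneg fun t => mul_nonneg (b.nonneg_normed _) (h0 _)
  · refine closure_minimal ((support_convolution_subset _).trans ?_) Metric.isClosed_cthickening
    rw [b.support_normed_eq]
    rintro _ ⟨x, hx, y, hy, rfl⟩
    refine Metric.mem_cthickening_of_dist_le _ y _ _ (subset_tsupport _ hy) ?_
    simpa using (mem_ball_zero_iff.mp hx).le.trans hrδ
  · rw [← Real.dist_eq]
    exact b.dist_normed_convolution_le hφ.continuous.aestronglyMeasurable
      fun x hx => (hφr₁ (hx.trans_le hrr₁)).le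
  · rw [hfderiv, ← dist_eq_norm]
    exact b.dist_normed_convolution_le hdφ.aestronglyMeasurable
      fun x hx => (hφr₂ (hx.trans_le hrr₂)).le

variable [MeasurableSpace E] [BorelSpace E] {μ : Measure E}
  {ι : Type*} [Fintype ι] {e : ι → E} {U K : Set E} {B₀ : E → ℝ} {B : ι → E → ℝ}

lemma integrableOn_weakPairing [IsFiniteMeasureOnCompacts μ] (hU : IsOpen U)
    (hB₀ : LocallyBoundedOn B₀ U μ) (hB : ∀ i, LocallyBoundedOn (B i) U μ)
    {φ : E → ℝ} (hφ : ContDiff ℝ 1 φ) (hK : IsCompact K) (hKU : K ⊆ U) (hφK : tsupport φ ⊆ K) :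
    IntegrableOn (weakPairing e B₀ B φ) U μ := by
  have hφB : LocallyBoundedOn φ U μ := .of_continuousOn hφ.continuous.continuousOn hU.measurableSet
  have hdφB (i : ι) : LocallyBoundedOn (fun p => fderiv ℝ φ p (e i)) U μ :=
    .of_continuousOn ((hφ.continuous_fderiv one_ne_zero).clm_apply continuous_const).continuousOn
      hU.measurableSet
  exact ((hB₀.mul hφB).add (.sum _ fun i => (hB i).mul (hdφB i))).integrableOn hK hKU
    fun p hp => weakPairing_of_notMem_tsupport e B₀ B fun hp' => hp (hφK hp')

lemma integral_weakPairing_nonneg_of_contDiff_one [FiniteDimensional ℝ E]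
    [IsFiniteMeasureOnCompacts μ] (hU : IsOpen U) (hB₀ : LocallyBoundedOn B₀ U μ)
    (hB : ∀ i, LocallyBoundedOn (B i) U μ)
    (h : ∀ φ, IsTestFunction ⊤ U φ → 0 ≤ ∫ p in U, weakPairing e B₀ B φ p ∂μ)
    {φ : E → ℝ} (hφ : IsTestFunction 1 U φ) : 0 ≤ ∫ p in U, weakPairing e B₀ B φ p ∂μ := by
  obtain ⟨δ, hδ, hKU⟩ :=
    hφ.hasCompactSupport.isCompact.exists_cthickening_subset_open hU hφ.tsupport_subset
  set K := Metric.cthickening δ (tsupport φ)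
  have hK : IsCompact K := hφ.hasCompactSupport.isCompact.cthickening
  have hφK : tsupport φ ⊆ K := Metric.self_subset_cthickening _
  have hφint := integrableOn_weakPairing (e := e) hU hB₀ hB hφ.contDiff hK hKU hφK
  let G : E → ℝ := K.indicator fun p => |B₀ p| + ∑ i, |B i p| * ‖e i‖
  have hG : IntegrableOn G U μ :=
    ((hB₀.abs.add (.sum _ fun i => (hB i).abs.mul (.const _))).indicator
      hK.measurableSet).integrableOn hK hKU fun p hp => Set.indicator_of_notMem hp _
  refine nonneg_of_forall_pos_add_mul (b := ∫ p in U, G p ∂μ) fun ε hε => ?_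
  obtain ⟨ψ, hψ, hψ0, hψK, hψφ, hdψφ⟩ := exists_contDiff_dist_le_of_hasCompactSupport
    hφ.contDiff hφ.hasCompactSupport hφ.nonneg hε hδ
  have hψint := integrableOn_weakPairing (e := e) hU hB₀ hB
    (hψ.of_le (by exact_mod_cast le_top)) hK hKU hψK
  calc 0 ≤ ∫ p in U, weakPairing e B₀ B ψ p ∂μ :=
        h ψ ⟨hψ, hK.of_isClosed_subset (isClosed_tsupport _) hψK, hψK.trans hKU, hψ0⟩
    _ ≤ ∫ p in U, (weakPairing e B₀ B φ p + ε * G p) ∂μ := by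
        refine integral_mono hψint (hφint.add (hG.const_mul ε)) fun p => ?_
        by_cases hp : p ∈ K
        · rw [← sub_le_iff_le_add']
          simpa only [G, Set.indicator_of_mem hp] using
            (le_abs_self _).trans (abs_weakPairing_sub_le (hψφ p) (hdψφ p))
        · simp [G, hp, weakPairing_of_notMem_tsupport _ _ _ fun hp' => hp (hψK hp'),
            weakPairing_of_notMem_tsupport _ _ _ fun hp' => hp (hφK hp')]
    _ = (∫ p in U, weakPairing e B₀ B φ p ∂μ) + ε * ∫ p in U, G p ∂μ := by
        rw [integral_add hφint (hG.const_mul ε), integral_const_mul]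

end TestFunctions

/-! ### The elliptic form -/

lemma bilinForm_apply_le {V : Type*} [AddCommGroup V] [Module ℝ V]
    {B : LinearMap.BilinForm ℝ V} (hB : B.IsPosSemidef) {θ : ℝ} (hθ : 0 < θ) (x y : V) :
    B x y ≤ θ * B y y + B x x / (4 * θ) := by
  have hnonneg := hB.isNonneg.nonneg (x - (2 * θ) • y)
  have hsymm : B y x = B x y := hB.isSymm.eq y x
  simp only [map_sub, map_smul, LinearMap.sub_apply, LinearMap.smul_apply, smul_eq_mul,
    hsymm] at hnonneg
  have hmul : 4 * θ * B x y ≤ 4 * θ * (θ * B y y + B x x / (4 * θ)) := by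
    rw [mul_add, mul_div_cancel₀ _ (by positivity)]
    linarith
  exact le_of_mul_le_mul_left hmul (by positivity)

section EllipticForm

variable {n : ℕ} {a : Fin n → Fin n → Pt n → ℝ}

/-- The spatial components of a covector on space-time. -/
def spatialPart (n : ℕ) : (Pt n →L[ℝ] ℝ) →ₗ[ℝ] Fin n → ℝ where
  toFun L i := L (0, EuclideanSpace.single i 1)
  map_add' _ _ := rfl
  map_smul' _ _ := rfl

/-- The form `∑ a_ij ξ_i η_j` at the point `p`, evaluated at the spatial parts of covectors on
space-time, so that it applies directly to Fréchet derivatives. -/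
def coeffForm (a : Fin n → Fin n → Pt n → ℝ) (p : Pt n) : LinearMap.BilinForm ℝ (Pt n →L[ℝ] ℝ) :=
  (Matrix.toBilin' (Matrix.of fun i j => a i j p)).comp (spatialPart n) (spatialPart n)

lemma coeffForm_apply (p : Pt n) (L L' : Pt n →L[ℝ] ℝ) :
    coeffForm a p L L' = ∑ i, ∑ j, a i j p * spatialPart n L i * spatialPart n L' j := by
  simp only [coeffForm, LinearMap.BilinForm.comp_apply, Matrix.toBilin'_apply, Matrix.of_apply,
    mul_comm (a _ _ p)]

lemma isPosSemidef_coeffForm {p : Pt n} (hsymm : ∀ i j, a i j p = a j i p)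
    (hnonneg : ∀ ξ : Xn n, 0 ≤ ∑ i, ∑ j, a i j p * ξ i * ξ j) :
    (coeffForm a p).IsPosSemidef := by
  refine ⟨⟨fun L L' => ?_⟩, ⟨fun L => ?_⟩⟩
  · rw [coeffForm_apply, coeffForm_apply, Finset.sum_comm]
    refine Finset.sum_congr rfl fun i _ => Finset.sum_congr rfl fun j _ => ?_
    rw [hsymm j i, mul_right_comm]
  · rw [coeffForm_apply]
    exact hnonneg (WithLp.toLp 2 (spatialPart n L))

/-- The coefficients are measurable, locally bounded, symmetric and nonnegative almost everywhere;
no lower ellipticity bound is imposed. -/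
structure IsDegenerateElliptic (a : Fin n → Fin n → Pt n → ℝ) : Prop where
  locallyBoundedOn : ∀ i j, LocallyBoundedOn (a i j) (halfSpace n) volume
  isPosSemidef : ∀ᵐ p ∂volume.restrict (halfSpace n), (coeffForm a p).IsPosSemidef

lemma differentiableAt_of_contDiffOn_halfSpace {w : Pt n → ℝ}
    (hw : ContDiffOn ℝ 1 w (halfSpace n)) {p : Pt n} (hp : p ∈ halfSpace n) :
    DifferentiableAt ℝ w p :=
  (hw.differentiableOn one_ne_zero).differentiableAt ((isOpen_halfSpace n).mem_nhds hp)

lemma locallyBoundedOn_fderiv_apply {w : Pt n → ℝ} (hw : ContDiffOn ℝ 1 w (halfSpace n))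
    (e : Pt n) : LocallyBoundedOn (fun p => fderiv ℝ w p e) (halfSpace n) volume :=
  .of_continuousOn ((hw.continuousOn_fderiv_of_isOpen (isOpen_halfSpace n) le_rfl).clm_apply
    continuousOn_const) (measurableSet_halfSpace n)

lemma IsDegenerateElliptic.locallyBoundedOn_coeffForm (ha : IsDegenerateElliptic a)
    {φ w : Pt n → ℝ} (hφ : ContDiffOn ℝ 1 φ (halfSpace n)) (hw : ContDiffOn ℝ 1 w (halfSpace n)) :
    LocallyBoundedOn (fun p => coeffForm a p (fderiv ℝ φ p) (fderiv ℝ w p))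
      (halfSpace n) volume := by
  simp only [coeffForm_apply]
  exact .sum _ fun i => .sum _ fun j =>
    ((ha.locallyBoundedOn i j).mul (locallyBoundedOn_fderiv_apply hφ _)).mul
      (locallyBoundedOn_fderiv_apply hw _)

end EllipticForm

/-! ### Nonnegative supersolutions from ordered pairs -/

section OddPow

variable {q u v : ℝ}

lemma oddPow_of_nonneg (hq : 1 < q) (hu : 0 ≤ u) : oddPow q u = u ^ q := by
  rcases hu.eq_or_lt with rfl | hu
  · simp [oddPow, Real.zero_rpow (by linarith : q ≠ 0)]
  · rw [oddPow, abs_of_pos hu, Real.rpow_sub_one hu.ne', div_mul_cancel₀ _ hu.ne']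

lemma oddPow_neg (q u : ℝ) : oddPow q (-u) = -oddPow q u := by simp [oddPow]

lemma continuous_oddPow (hq : 1 < q) : Continuous (oddPow q) :=
  (continuous_abs.rpow_const fun _ => Or.inr (by linarith)).mul continuous_id

lemma two_rpow_mul_add_rpow_le (hq : 1 ≤ q) (hu : 0 ≤ u) (hv : 0 ≤ v) :
    2 ^ (1 - q) * (u + v) ^ q ≤ u ^ q + v ^ q := by
  lift u to NNReal using hu
  lift v to NNReal using hv
  have hconv : ((u + v : ℝ)) ^ q ≤ 2 ^ (q - 1) * ((u : ℝ) ^ q + (v : ℝ) ^ q) := by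
    exact_mod_cast NNReal.rpow_add_le_mul_rpow_add_rpow u v hq
  calc (2 : ℝ) ^ (1 - q) * (u + v) ^ q
      ≤ 2 ^ (1 - q) * (2 ^ (q - 1) * ((u : ℝ) ^ q + (v : ℝ) ^ q)) := by gcongr
    _ = (u : ℝ) ^ q + (v : ℝ) ^ q := by
        rw [← mul_assoc, ← Real.rpow_add two_pos, sub_add_sub_cancel', sub_self, Real.rpow_zero,
          one_mul]

lemma sub_rpow_le_oddPow_sub_of_nonneg (hq : 1 < q) (hv : 0 ≤ v) (huv : v ≤ u) :
    (u - v) ^ q ≤ oddPow q u - oddPow q v := by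
  rw [oddPow_of_nonneg hq (hv.trans huv), oddPow_of_nonneg hq hv, le_sub_iff_add_le]
  simpa using Real.add_rpow_le_rpow_add (sub_nonneg.mpr huv) hv hq.le

lemma two_rpow_mul_sub_rpow_le_oddPow_sub (hq : 1 < q) (huv : v ≤ u) :
    2 ^ (1 - q) * (u - v) ^ q ≤ oddPow q u - oddPow q v := by
  have hle : (2 : ℝ) ^ (1 - q) * (u - v) ^ q ≤ (u - v) ^ q :=
    mul_le_of_le_one_left (Real.rpow_nonneg (sub_nonneg.mpr huv) q)
      (Real.rpow_le_one_of_one_le_of_nonpos one_le_two (by linarith))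
  rcases le_total 0 v with hv | hv
  · exact hle.trans (sub_rpow_le_oddPow_sub_of_nonneg hq hv huv)
  rcases le_total 0 u with hu | hu
  · have hmixed := two_rpow_mul_add_rpow_le hq.le hu (neg_nonneg.mpr hv)
    rwa [← oddPow_of_nonneg hq hu, ← oddPow_of_nonneg hq (neg_nonneg.mpr hv), oddPow_neg,
      ← sub_eq_add_neg, ← sub_eq_add_neg] at hmixed
  · have hflip := sub_rpow_le_oddPow_sub_of_nonneg hq (neg_nonneg.mpr hu) (neg_le_neg huv)
    rw [oddPow_neg, oddPow_neg, neg_sub_neg, neg_sub_neg] at hflip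
    exact hle.trans hflip

end OddPow

section Supersolution

variable {n : ℕ} {a : Fin n → Fin n → Pt n → ℝ} {f g u v w φ : Pt n → ℝ} {q κ : ℝ}

/-- The integrand of the weak form of `w_t - Lw - f` tested against `φ`. -/
def parabolicPairing (a : Fin n → Fin n → Pt n → ℝ) (f w φ : Pt n → ℝ) (p : Pt n) : ℝ :=
  pdT w p * φ p + coeffForm a p (fderiv ℝ φ p) (fderiv ℝ w p) - f p * φ p

lemma parabolicPairing_eq_weakPairing (a : Fin n → Fin n → Pt n → ℝ) (f w φ : Pt n → ℝ) :
    parabolicPairing a f w φ = weakPairing (fun i => (0, EuclideanSpace.single i 1))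
      (fun p => pdT w p - f p) (fun i p => ∑ j, a i j p * pdX w j p) φ := by
  funext p
  have hform : coeffForm a p (fderiv ℝ φ p) (fderiv ℝ w p) =
      ∑ i, (∑ j, a i j p * pdX w j p) * fderiv ℝ φ p (0, EuclideanSpace.single i 1) := by
    simp only [coeffForm_apply, Finset.sum_mul, mul_right_comm]
    rfl
  rw [parabolicPairing, weakPairing, hform]
  ring

lemma parabolicPairing_sub {p : Pt n} (hu : DifferentiableAt ℝ u p)
    (hv : DifferentiableAt ℝ v p) :
    parabolicPairing a (fun p => f p - g p) (fun p => u p - v p) φ p =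
      parabolicPairing a f u φ p - parabolicPairing a g v φ p := by
  simp only [parabolicPairing, pdT, fderiv_fun_sub hu hv, map_sub, sub_apply]
  ring

lemma locallyBoundedOn_pdT (hw : ContDiffOn ℝ 1 w (halfSpace n)) :
    LocallyBoundedOn (pdT w) (halfSpace n) volume :=
  locallyBoundedOn_fderiv_apply hw (1, 0)

lemma IsDegenerateElliptic.locallyBoundedOn_flux (ha : IsDegenerateElliptic a)
    (hw : ContDiffOn ℝ 1 w (halfSpace n)) (i : Fin n) :
    LocallyBoundedOn (fun p => ∑ j, a i j p * pdX w j p) (halfSpace n) volume :=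
  .sum _ fun j => (ha.locallyBoundedOn i j).mul (locallyBoundedOn_fderiv_apply hw _)

lemma IsDegenerateElliptic.integrableOn_parabolicPairing (ha : IsDegenerateElliptic a)
    (hf : LocallyBoundedOn f (halfSpace n) volume) (hw : ContDiffOn ℝ 1 w (halfSpace n))
    (hφ : IsTestFunction 1 (halfSpace n) φ) :
    IntegrableOn (parabolicPairing a f w φ) (halfSpace n) := by
  rw [parabolicPairing_eq_weakPairing]
  exact integrableOn_weakPairing (isOpen_halfSpace n) ((locallyBoundedOn_pdT hw).sub hf)
    (ha.locallyBoundedOn_flux hw) hφ.contDiff hφ.hasCompactSupport hφ.tsupport_subset le_rfl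

lemma IsDegenerateElliptic.integral_parabolicPairing_nonneg_of_contDiff_one
    (ha : IsDegenerateElliptic a) (hf : LocallyBoundedOn f (halfSpace n) volume)
    (hw : ContDiffOn ℝ 1 w (halfSpace n))
    (h : ∀ φ, IsTestFunction ⊤ (halfSpace n) φ →
      0 ≤ ∫ p in halfSpace n, parabolicPairing a f w φ p)
    (hφ : IsTestFunction 1 (halfSpace n) φ) :
    0 ≤ ∫ p in halfSpace n, parabolicPairing a f w φ p := by
  simp only [parabolicPairing_eq_weakPairing] at h ⊢
  exact integral_weakPairing_nonneg_of_contDiff_one (isOpen_halfSpace n)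
    ((locallyBoundedOn_pdT hw).sub hf) (ha.locallyBoundedOn_flux hw) h hφ

/-- `w` is a nonnegative weak solution of `w_t ≥ Lw + κ w ^ q` on the half-space, tested against
functions of class `C¹`. -/
structure IsNonnegSupersolution (a : Fin n → Fin n → Pt n → ℝ) (q κ : ℝ) (w : Pt n → ℝ) :
    Prop where
  contDiffOn : ContDiffOn ℝ 1 w (halfSpace n)
  nonneg : ∀ p ∈ halfSpace n, 0 ≤ w p
  integral_nonneg : ∀ φ, IsTestFunction 1 (halfSpace n) φ →
    0 ≤ ∫ p in halfSpace n, parabolicPairing a (fun p => κ * w p ^ q) w φ p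

lemma locallyBoundedOn_oddPow_comp (hq : 1 < q) (hw : ContDiffOn ℝ 1 w (halfSpace n)) :
    LocallyBoundedOn (fun p => oddPow q (w p)) (halfSpace n) volume :=
  .of_continuousOn ((continuous_oddPow hq).comp_continuousOn hw.continuousOn)
    (measurableSet_halfSpace n)

lemma IsTestFunction.of_top {E : Type*} [NormedAddCommGroup E] [NormedSpace ℝ E] {U : Set E}
    {φ : E → ℝ} (k : ℕ∞) (hφ : IsTestFunction ⊤ U φ) : IsTestFunction k U φ :=
  ⟨hφ.contDiff.of_le (by exact_mod_cast le_top), hφ.2, hφ.3, hφ.4⟩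

lemma WeakSuperSol.integral_parabolicPairing_sub_nonneg (hq : 1 < q) (ha : IsDegenerateElliptic a)
    (hu : ContDiffOn ℝ 1 u (halfSpace n)) (hv : ContDiffOn ℝ 1 v (halfSpace n))
    (hsuper : WeakSuperSol a q u) (hsub : WeakSubSol a q v)
    (hφ : IsTestFunction ⊤ (halfSpace n) φ) :
    0 ≤ ∫ p in halfSpace n, parabolicPairing a (fun p => oddPow q (u p) - oddPow q (v p))
      (fun p => u p - v p) φ p := by
  have hpairing (w : Pt n → ℝ) : (fun p => pdT w p * φ p +
      ∑ i, ∑ j, a i j p * pdX φ i p * pdX w j p - oddPow q (w p) * φ p) =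
      parabolicPairing a (fun p => oddPow q (w p)) w φ := by
    funext p
    rw [parabolicPairing, coeffForm_apply]
    rfl
  have hu_nonneg := hsuper φ hφ.1 hφ.2 hφ.3 hφ.4
  have hv_nonpos := hsub φ hφ.1 hφ.2 hφ.3 hφ.4
  rw [hpairing] at hu_nonneg hv_nonpos
  have hint {w : Pt n → ℝ} (hw : ContDiffOn ℝ 1 w (halfSpace n)) :=
    ha.integrableOn_parabolicPairing (locallyBoundedOn_oddPow_comp hq hw) hw (hφ.of_top 1)
  rw [setIntegral_congr_fun (measurableSet_halfSpace n) fun p hp =>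
      parabolicPairing_sub (differentiableAt_of_contDiffOn_halfSpace hu hp)
        (differentiableAt_of_contDiffOn_halfSpace hv hp),
    integral_sub (hint hu) (hint hv)]
  exact sub_nonneg.mpr (hv_nonpos.trans hu_nonneg)

lemma isNonnegSupersolution_sub (hq : 1 < q) (ha : IsDegenerateElliptic a)
    (hu : ContDiffOn ℝ 1 u (halfSpace n)) (hv : ContDiffOn ℝ 1 v (halfSpace n))
    (hsuper : WeakSuperSol a q u) (hsub : WeakSubSol a q v) (huv : ∀ p ∈ halfSpace n, v p ≤ u p) :
    IsNonnegSupersolution a q (2 ^ (1 - q)) fun p => u p - v p := by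
  have hw : ContDiffOn ℝ 1 (fun p => u p - v p) (halfSpace n) := hu.sub hv
  have hpow : LocallyBoundedOn (fun p => 2 ^ (1 - q) * (u p - v p) ^ q) (halfSpace n) volume :=
    (LocallyBoundedOn.const _).mul (.of_continuousOn (hw.continuousOn.rpow_const
      fun p _ => Or.inr (by linarith)) (measurableSet_halfSpace n))
  have hodd := (locallyBoundedOn_oddPow_comp hq hu).sub (locallyBoundedOn_oddPow_comp hq hv)
  refine ⟨hw, fun p hp => sub_nonneg.mpr (huv p hp), fun φ hφ => ?_⟩
  refine (ha.integral_parabolicPairing_nonneg_of_contDiff_one hodd hw (fun _ =>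
    hsuper.integral_parabolicPairing_sub_nonneg hq ha hu hv hsub) hφ).trans ?_
  refine setIntegral_mono_on (ha.integrableOn_parabolicPairing hodd hw hφ)
    (ha.integrableOn_parabolicPairing hpow hw hφ) (measurableSet_halfSpace n) fun p hp => ?_
  exact sub_le_sub_left (mul_le_mul_of_nonneg_right
    (two_rpow_mul_sub_rpow_le_oddPow_sub hq (huv p hp)) (hφ.nonneg p)) _

lemma IsNonnegSupersolution.const_mul {m : ℝ} (hw : IsNonnegSupersolution a q κ w) (hm : 0 < m) :
    IsNonnegSupersolution a q (κ / m ^ (q - 1)) fun p => m * w p := by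
  refine ⟨contDiffOn_const.mul hw.contDiffOn, fun p hp => mul_nonneg hm.le (hw.nonneg p hp),
    fun φ hφ => ?_⟩
  have hscale : ∀ p ∈ halfSpace n,
      parabolicPairing a (fun p => κ / m ^ (q - 1) * (m * w p) ^ q) (fun p => m * w p) φ p =
        m * parabolicPairing a (fun p => κ * w p ^ q) w φ p := by
    intro p hp
    simp only [parabolicPairing, pdT, smul_apply, smul_eq_mul, map_smul,
      fderiv_const_mul (differentiableAt_of_contDiffOn_halfSpace hw.contDiffOn hp),
      Real.mul_rpow hm.le (hw.nonneg p hp), Real.rpow_sub_one hm.ne']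
    field_simp
  rw [setIntegral_congr_fun (measurableSet_halfSpace n) hscale, integral_const_mul]
  exact mul_nonneg hm.le (hw.integral_nonneg φ hφ)

end Supersolution

/-! ### Testing with powers of the solution -/

lemma IsTestFunction.mul_left {E : Type*} [NormedAddCommGroup E] [NormedSpace ℝ E] {k : ℕ∞}
    {U : Set E} {g ψ : E → ℝ} (hψ : IsTestFunction k U ψ) (hU : IsOpen U)
    (hg : ContDiffOn ℝ k g U) (hg0 : ∀ p ∈ U, 0 ≤ g p) :
    IsTestFunction k U fun p => g p * ψ p := by
  have hsupp : tsupport (fun p => g p * ψ p) ⊆ tsupport ψ := tsupport_mul_subset_right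
  refine ⟨contDiff_iff_contDiffAt.mpr fun p => ?_, hψ.hasCompactSupport.mul_left,
    hsupp.trans hψ.tsupport_subset, fun p => ?_⟩
  · by_cases hp : p ∈ U
    · exact (hg.contDiffAt (hU.mem_nhds hp)).mul hψ.contDiff.contDiffAt
    · exact contDiffAt_const.congr_of_eventuallyEq
        (notMem_tsupport_iff_eventuallyEq.mp fun h => hp (hψ.tsupport_subset (hsupp h)))
  · by_cases hp : p ∈ U
    · exact mul_nonneg (hg0 p hp) (hψ.nonneg p)
    · simp [image_eq_zero_of_notMem_tsupport fun h => hp (hψ.tsupport_subset h)]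

lemma integral_fderiv_apply_eq_zero {E : Type*} [NormedAddCommGroup E] [NormedSpace ℝ E]
    [FiniteDimensional ℝ E] [MeasurableSpace E] [BorelSpace E] {μ : Measure E}
    [μ.IsAddHaarMeasure] {φ : E → ℝ} (hφ : ContDiff ℝ 1 φ) (hc : HasCompactSupport φ) (e : E) :
    ∫ p, fderiv ℝ φ p e ∂μ = 0 := by
  have hint : Integrable (fun p => fderiv ℝ φ p e) μ :=
    ((hφ.continuous_fderiv one_ne_zero).clm_apply continuous_const).integrable_of_hasCompactSupport
      (hc.fderiv_apply ℝ e)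
  simpa using integral_mul_fderiv_eq_neg_fderiv_mul_of_integrable (μ := μ) (f := fun _ => (1 : ℝ))
    (by simp) (by simpa using hint)
    (by simpa using hφ.continuous.integrable_of_hasCompactSupport hc)
    (fun _ _ => differentiableAt_const _) (fun p _ => (hφ.differentiable one_ne_zero) p)

section PowerTest

variable {n : ℕ} {a : Fin n → Fin n → Pt n → ℝ} {q κ ν d : ℝ} {h ψ : Pt n → ℝ}

lemma pdT_of_notMem_tsupport {p : Pt n} (hp : p ∉ tsupport ψ) : pdT ψ p = 0 := by
  rw [pdT, fderiv_of_notMem_tsupport (𝕜 := ℝ) hp, zero_apply]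

lemma integral_pdT_eq_zero (hψ : IsTestFunction 1 (halfSpace n) ψ) :
    ∫ p in halfSpace n, pdT ψ p = 0 := by
  have : (volume : Measure (Pt n)).IsAddHaarMeasure :=
    Measure.prod.instIsAddHaarMeasure (volume : Measure ℝ) (volume : Measure (Xn n))
  rw [setIntegral_eq_integral_of_forall_compl_eq_zero fun p hp =>
    pdT_of_notMem_tsupport fun hp' => hp (hψ.tsupport_subset hp')]
  exact integral_fderiv_apply_eq_zero hψ.contDiff hψ.hasCompactSupport _

/-- The gradient term produced by testing against `(h + d) ^ (-ν) ψ`. -/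
def energyDensity (a : Fin n → Fin n → Pt n → ℝ) (ν d : ℝ) (h ψ : Pt n → ℝ) (p : Pt n) : ℝ :=
  (h p + d) ^ (-ν - 1) * ψ p * coeffForm a p (fderiv ℝ h p) (fderiv ℝ h p)

/-- What remains of the weak inequality `h_t - Lh - κ h ^ q ≥ 0` tested against `(h + d) ^ (-ν) ψ`
once the time derivative has been moved onto `ψ`. -/
def testedIntegrand (a : Fin n → Fin n → Pt n → ℝ) (q κ ν d : ℝ) (h ψ : Pt n → ℝ) (p : Pt n) : ℝ :=
  (h p + d) ^ (1 - ν) / (1 - ν) * -pdT ψ p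
    + (h p + d) ^ (-ν) * coeffForm a p (fderiv ℝ ψ p) (fderiv ℝ h p)
    - ν * energyDensity a ν d h ψ p
    - κ * h p ^ q * ((h p + d) ^ (-ν) * ψ p)

namespace IsNonnegSupersolution

variable (hh : IsNonnegSupersolution a q κ h)

include hh

lemma contDiffOn_add_rpow (hd : 0 < d) (r : ℝ) :
    ContDiffOn ℝ 1 (fun p => (h p + d) ^ r) (halfSpace n) :=
  (hh.contDiffOn.add contDiffOn_const).rpow_const_of_ne
    fun p hp => (add_pos_of_nonneg_of_pos (hh.nonneg p hp) hd).ne'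

lemma isTestFunction_add_rpow_mul (hψ : IsTestFunction 1 (halfSpace n) ψ) (hd : 0 < d) (r : ℝ) :
    IsTestFunction 1 (halfSpace n) fun p => (h p + d) ^ r * ψ p :=
  hψ.mul_left (isOpen_halfSpace n) (hh.contDiffOn_add_rpow hd r)
    fun p hp => Real.rpow_nonneg (add_nonneg (hh.nonneg p hp) hd.le) r

lemma fderiv_add_rpow_mul (hψ : IsTestFunction 1 (halfSpace n) ψ) (hd : 0 < d) (r : ℝ) {p : Pt n}
    (hp : p ∈ halfSpace n) : fderiv ℝ (fun p => (h p + d) ^ r * ψ p) p =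
      (r * (h p + d) ^ (r - 1) * ψ p) • fderiv ℝ h p + (h p + d) ^ r • fderiv ℝ ψ p := by
  have hrpow : HasFDerivAt (fun p => (h p + d) ^ r)
      ((r * (h p + d) ^ (r - 1)) • fderiv ℝ h p) p :=
    ((differentiableAt_of_contDiffOn_halfSpace hh.contDiffOn hp).hasFDerivAt.add_const
      d).rpow_const (Or.inl (add_pos_of_nonneg_of_pos (hh.nonneg p hp) hd).ne')
  rw [(hrpow.fun_mul (hψ.contDiff.differentiable one_ne_zero p).hasFDerivAt).fderiv, smul_smul,
    add_comm, mul_comm (ψ p)]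

lemma locallyBoundedOn_add_rpow (hd : 0 < d) (r : ℝ) :
    LocallyBoundedOn (fun p => (h p + d) ^ r) (halfSpace n) volume :=
  .of_continuousOn (hh.contDiffOn_add_rpow hd r).continuousOn (measurableSet_halfSpace n)

lemma locallyBoundedOn_rpow (hq : 0 ≤ q) :
    LocallyBoundedOn (fun p => h p ^ q) (halfSpace n) volume :=
  .of_continuousOn (hh.contDiffOn.continuousOn.rpow_const fun _ _ => Or.inr hq)
    (measurableSet_halfSpace n)

lemma integrableOn_energyDensity (ha : IsDegenerateElliptic a)
    (hψ : IsTestFunction 1 (halfSpace n) ψ) (hd : 0 < d) :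
    IntegrableOn (energyDensity a ν d h ψ) (halfSpace n) := by
  have hψB : LocallyBoundedOn ψ (halfSpace n) volume :=
    .of_continuousOn hψ.contDiff.continuous.continuousOn (measurableSet_halfSpace n)
  refine (((hh.locallyBoundedOn_add_rpow hd _).mul hψB).mul (ha.locallyBoundedOn_coeffForm
    hh.contDiffOn hh.contDiffOn)).integrableOn hψ.hasCompactSupport.isCompact hψ.tsupport_subset
    fun p hp => ?_
  rw [image_eq_zero_of_notMem_tsupport hp, mul_zero, zero_mul]

lemma testedIntegrand_eq (hψ : IsTestFunction 1 (halfSpace n) ψ) (hd : 0 < d) (hν : ν ≠ 1)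
    {p : Pt n} (hp : p ∈ halfSpace n) : testedIntegrand a q κ ν d h ψ p =
      parabolicPairing a (fun p => κ * h p ^ q) h (fun p => (h p + d) ^ (-ν) * ψ p) p
        - (1 - ν)⁻¹ * pdT (fun p => (h p + d) ^ (1 - ν) * ψ p) p := by
  have hν' : 1 - ν ≠ 0 := sub_ne_zero.mpr hν.symm
  have hexp : 1 - ν - 1 = -ν := by ring
  simp only [testedIntegrand, energyDensity, parabolicPairing, pdT,
    hh.fderiv_add_rpow_mul hψ hd _ hp, hexp, map_add, map_smul, add_apply, smul_apply,
    LinearMap.add_apply, LinearMap.smul_apply, smul_eq_mul]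
  field_simp
  ring

lemma integrableOn_pairing_add_rpow (hq : 0 ≤ q) (ha : IsDegenerateElliptic a)
    (hψ : IsTestFunction 1 (halfSpace n) ψ) (hd : 0 < d) (r : ℝ) :
    IntegrableOn (parabolicPairing a (fun p => κ * h p ^ q) h fun p => (h p + d) ^ r * ψ p)
      (halfSpace n) :=
  ha.integrableOn_parabolicPairing ((LocallyBoundedOn.const κ).mul (hh.locallyBoundedOn_rpow hq))
    hh.contDiffOn (hh.isTestFunction_add_rpow_mul hψ hd r)

lemma integrableOn_pdT_add_rpow (hψ : IsTestFunction 1 (halfSpace n) ψ) (hd : 0 < d) (r : ℝ) :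
    IntegrableOn (pdT fun p => (h p + d) ^ r * ψ p) (halfSpace n) := by
  have hφ := hh.isTestFunction_add_rpow_mul hψ hd r
  exact (locallyBoundedOn_pdT hφ.contDiff.contDiffOn).integrableOn
    hφ.hasCompactSupport.isCompact hφ.tsupport_subset fun _ => pdT_of_notMem_tsupport

lemma integrableOn_testedIntegrand (hq : 0 ≤ q) (ha : IsDegenerateElliptic a)
    (hψ : IsTestFunction 1 (halfSpace n) ψ) (hd : 0 < d) (hν : ν ≠ 1) :
    IntegrableOn (testedIntegrand a q κ ν d h ψ) (halfSpace n) :=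
  ((hh.integrableOn_pairing_add_rpow hq ha hψ hd _).sub
    ((hh.integrableOn_pdT_add_rpow hψ hd _).const_mul _)).congr_fun
    (fun _ hp => (hh.testedIntegrand_eq hψ hd hν hp).symm) (measurableSet_halfSpace n)

lemma integral_testedIntegrand_nonneg (hq : 0 ≤ q) (ha : IsDegenerateElliptic a)
    (hψ : IsTestFunction 1 (halfSpace n) ψ) (hd : 0 < d) (hν : ν ≠ 1) :
    0 ≤ ∫ p in halfSpace n, testedIntegrand a q κ ν d h ψ p := by
  rw [setIntegral_congr_fun (measurableSet_halfSpace n) fun p hp =>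
      hh.testedIntegrand_eq hψ hd hν hp,
    integral_sub (hh.integrableOn_pairing_add_rpow hq ha hψ hd _)
      ((hh.integrableOn_pdT_add_rpow hψ hd _).const_mul _),
    integral_const_mul, integral_pdT_eq_zero (hh.isTestFunction_add_rpow_mul hψ hd _), mul_zero,
    sub_zero]
  exact hh.integral_nonneg _ (hh.isTestFunction_add_rpow_mul hψ hd _)

end IsNonnegSupersolution

end PowerTest

/-! ### Young-type inequalities -/

section Young

variable {q r s p ν ε k : ℝ} {N : ℕ}

/-- An exponent `ν` for the test function `(h + d) ^ (-ν) ψ`, together with a power `N` of the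
cutoff large enough for the absorption of the lower order terms. -/
structure AdmissibleExponents (q ν : ℝ) (N : ℕ) : Prop where
  pos : 0 < ν
  lt_one : ν < 1
  one_add_lt : 1 + ν < q
  two_mul_le : 2 * (1 + ν) ≤ N * (q - 1 - ν)

lemma exists_admissibleExponents (hq : 1 < q) : ∃ ν N, AdmissibleExponents q ν N := by
  obtain ⟨ν, hν0, hν⟩ := exists_between (lt_min one_pos (sub_pos.mpr hq))
  obtain ⟨hν1, hνq⟩ := lt_min_iff.mp hν
  obtain ⟨N, hN⟩ := exists_nat_ge (2 * (1 + ν) / (q - 1 - ν))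
  exact ⟨ν, N, hν0, hν1, by linarith, (div_le_iff₀ (by linarith)).mp hN⟩

namespace AdmissibleExponents

lemma one_lt (hN : AdmissibleExponents q ν N) : 1 < q := by
  linarith [hN.pos, hN.one_add_lt]

lemma ne_zero (hN : AdmissibleExponents q ν N) : N ≠ 0 := by
  rintro rfl
  have := hN.two_mul_le
  rw [Nat.cast_zero, zero_mul] at this
  linarith [hN.pos]

lemma two_mul_le_of_le (hN : AdmissibleExponents q ν N) (hp : p ≤ 1 + ν)
    (hr : q - 1 - ν ≤ r - p) : 2 * p ≤ N * (r - p) :=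
  calc 2 * p ≤ 2 * (1 + ν) := by gcongr
    _ ≤ N * (q - 1 - ν) := hN.two_mul_le
    _ ≤ N * (r - p) := by gcongr

end AdmissibleExponents

lemma exists_mul_rpow_mul_pow_le (hp : 0 ≤ p) (hpr : p < r) (hN : 2 * p ≤ N * (r - p))
    (hk : 0 ≤ k) (hε : 0 < ε) : ∃ C, 0 ≤ C ∧ ∀ H χ : ℝ, 0 < H → 0 ≤ χ → χ ≤ 1 →
      k * H ^ p * χ ^ N ≤ ε * (H ^ r * χ ^ (N + 2)) + C := by
  refine ⟨k * (k / ε) ^ (p / (r - p)), by positivity, fun H χ hH hχ0 hχ1 => ?_⟩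
  have hrp : 0 < r - p := sub_pos.mpr hpr
  rcases le_total k (ε * (H ^ (r - p) * χ ^ 2)) with hle | hge
  · calc k * H ^ p * χ ^ N ≤ ε * (H ^ (r - p) * χ ^ 2) * H ^ p * χ ^ N := by gcongr
      _ = ε * ((H ^ (r - p) * H ^ p) * χ ^ (N + 2)) := by ring
      _ = ε * (H ^ r * χ ^ (N + 2)) := by rw [← Real.rpow_add hH, sub_add_cancel]
      _ ≤ _ := le_add_of_nonneg_right (by positivity)
  · have hχN : χ ^ N ≤ χ ^ (2 * p / (r - p)) := by
      rw [← Real.rpow_natCast]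
      exact Real.rpow_le_rpow_of_exponent_ge' hχ0 hχ1 (by positivity) ((div_le_iff₀ hrp).mpr hN)
    have hpow : (H ^ (r - p) * χ ^ 2) ^ (p / (r - p)) = H ^ p * χ ^ (2 * p / (r - p)) := by
      rw [Real.mul_rpow (by positivity) (by positivity), ← Real.rpow_mul hH.le,
        mul_div_cancel₀ _ hrp.ne', ← Real.rpow_two, ← Real.rpow_mul hχ0, mul_div_assoc]
    calc k * H ^ p * χ ^ N ≤ k * (H ^ p * χ ^ (2 * p / (r - p))) := by
          rw [mul_assoc]
          gcongr
      _ ≤ k * (k / ε) ^ (p / (r - p)) := by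
          rw [← hpow]
          gcongr
          rwa [le_div_iff₀' hε]
      _ ≤ _ := le_add_of_nonneg_left (by positivity)

lemma add_rpow_add_le {h d : ℝ} (hq : 0 ≤ q) (hs : s ≤ 0) (hqs : 0 ≤ q + s) (hh : 0 ≤ h)
    (hd : 0 < d) (hd1 : d ≤ 1) : (h + d) ^ (q + s) ≤ 2 ^ q * (h ^ q * (h + d) ^ s + 1) := by
  have hH : 0 < h + d := by positivity
  rw [mul_add, mul_one]
  rcases le_total d h with hdh | hhd
  · calc (h + d) ^ (q + s) = (h + d) ^ q * (h + d) ^ s := Real.rpow_add hH q s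
      _ ≤ (2 * h) ^ q * (h + d) ^ s := by gcongr; linarith
      _ = 2 ^ q * (h ^ q * (h + d) ^ s) := by rw [Real.mul_rpow two_pos.le hh, mul_assoc]
      _ ≤ _ := le_add_of_nonneg_right (by positivity)
  · calc (h + d) ^ (q + s) ≤ 2 ^ (q + s) := by gcongr; linarith
      _ ≤ 2 ^ q := Real.rpow_le_rpow_of_exponent_le one_le_two (by linarith)
      _ ≤ _ := le_add_of_nonneg_left (by positivity)

lemma exists_mul_add_rpow_mul_pow_le (hq : 0 ≤ q) (hs : s ≤ 0) (hp : 0 ≤ p) (hpqs : p < q + s)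
    (hN : 2 * p ≤ N * (q + s - p)) (hk : 0 ≤ k) (hε : 0 < ε) :
    ∃ C, 0 ≤ C ∧ ∀ h d χ : ℝ, 0 ≤ h → 0 < d → d ≤ 1 → 0 ≤ χ → χ ≤ 1 →
      k * (h + d) ^ p * χ ^ N ≤ ε * (h ^ q * (h + d) ^ s * χ ^ (N + 2)) + C := by
  obtain ⟨C, hC, hyoung⟩ := exists_mul_rpow_mul_pow_le hp hpqs hN hk
    (div_pos hε (Real.rpow_pos_of_pos two_pos q))
  refine ⟨ε + C, by positivity, fun h d χ hh hd hd1 hχ0 hχ1 => ?_⟩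
  calc k * (h + d) ^ p * χ ^ N
      ≤ ε / 2 ^ q * ((h + d) ^ (q + s) * χ ^ (N + 2)) + C :=
        hyoung (h + d) χ (by positivity) hχ0 hχ1
    _ ≤ ε / 2 ^ q * (2 ^ q * (h ^ q * (h + d) ^ s + 1) * χ ^ (N + 2)) + C := by
        gcongr
        exact add_rpow_add_le hq hs (hp.trans hpqs.le) hh hd hd1
    _ = ε * (h ^ q * (h + d) ^ s * χ ^ (N + 2)) + ε * χ ^ (N + 2) + C := by
        field_simp
    _ ≤ ε * (h ^ q * (h + d) ^ s * χ ^ (N + 2)) + ε * 1 + C := by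
        gcongr
        exact pow_le_one₀ hχ0 hχ1
    _ = _ := by ring

lemma eventually_exists_mul_add_rpow_le (hp : 0 < p) (hpq : p ≤ q) (hk : 0 ≤ k) (hε : 0 < ε) :
    ∀ᶠ d in nhdsWithin (0 : ℝ) (Set.Ioi 0), ∃ C, 0 ≤ C ∧ ∀ h, 0 ≤ h →
      k * (h + d) ^ p ≤ ε + C * h ^ q := by
  have hlim : Filter.Tendsto (fun d : ℝ => k * (2 * d) ^ p)
      (nhdsWithin 0 (Set.Ioi 0)) (nhds 0) := by
    have hcont : Continuous fun d : ℝ => k * (2 * d) ^ p :=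
      continuous_const.mul ((continuous_const.mul continuous_id).rpow_const fun _ => Or.inr hp.le)
    simpa [Real.zero_rpow hp.ne'] using (hcont.tendsto 0).mono_left nhdsWithin_le_nhds
  filter_upwards [hlim.eventually_le_const hε, self_mem_nhdsWithin] with d hd (hd0 : 0 < d)
  refine ⟨k * 2 ^ p * d ^ (p - q), by positivity, fun h hh => ?_⟩
  rcases le_total h d with hhd | hdh
  · calc k * (h + d) ^ p ≤ k * (2 * d) ^ p := by gcongr; linarith
      _ ≤ ε := hd
      _ ≤ _ := le_add_of_nonneg_right (by positivity)
  · have hh0 : 0 < h := hd0.trans_le hdh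
    calc k * (h + d) ^ p ≤ k * (2 * h) ^ p := by gcongr; linarith
      _ = k * 2 ^ p * h ^ (p - q) * h ^ q := by
          rw [Real.mul_rpow two_pos.le hh, mul_assoc _ (h ^ (p - q)), ← Real.rpow_add hh0,
            sub_add_cancel, mul_assoc]
      _ ≤ k * 2 ^ p * d ^ (p - q) * h ^ q := by
          have hanti := Real.rpow_le_rpow_of_nonpos hd0 hdh (sub_nonpos.mpr hpq)
          gcongr
      _ ≤ _ := le_add_of_nonneg_left hε.le

end Young

/-! ### Energy and mass estimates -/

section Cutoff

variable {n : ℕ} {a : Fin n → Fin n → Pt n → ℝ} {δ : ℝ} {S K : Set (Pt n)} {η χ : Pt n → ℝ} {N : ℕ}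

/-- The test function `η χ ^ (N + 2)`. -/
def powerCutoff (η χ : Pt n → ℝ) (N : ℕ) (p : Pt n) : ℝ := η p * χ p ^ (N + 2)

/-- The weight `η χ ^ N` off the core `S`, which dominates the terms produced by differentiating
`powerCutoff η χ N`. -/
def exteriorWeight (S : Set (Pt n)) (η χ : Pt n → ℝ) (N : ℕ) : Pt n → ℝ :=
  Sᶜ.indicator fun p => η p * χ p ^ N

lemma mul_pow_mul_indicator_compl (δ : ℝ) (S : Set (Pt n)) (η χ : Pt n → ℝ) (N : ℕ)
    (p : Pt n) :
    η p * χ p ^ N * Sᶜ.indicator (fun _ => δ) p = δ * exteriorWeight S η χ N p := by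
  by_cases hp : p ∈ Sᶜ <;> simp [exteriorWeight, hp, mul_comm]

/-- A pair of cutoffs equal to `1` on `S` whose product is supported in `K`: `η` increases in time
and does not depend on `x`, while the derivatives of `χ` that matter in the equation are at most `δ`
and vanish on `S`. -/
structure IsCutoff (a : Fin n → Fin n → Pt n → ℝ) (δ : ℝ) (S K : Set (Pt n)) (η χ : Pt n → ℝ) :
    Prop where
  pos : 0 < δ
  measurableSet : MeasurableSet S
  isCompact : IsCompact K
  subset_halfSpace : K ⊆ halfSpace n
  contDiff_left : ContDiff ℝ 1 η
  contDiff_right : ContDiff ℝ 1 χ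
  nonneg_left : ∀ p, 0 ≤ η p
  nonneg_right : ∀ p, 0 ≤ χ p
  le_one_left : ∀ p, η p ≤ 1
  le_one_right : ∀ p, χ p ≤ 1
  eq_one_left : ∀ p ∈ S, η p = 1
  eq_one_right : ∀ p ∈ S, χ p = 1
  mul_eq_zero : ∀ p ∉ K, η p * χ p = 0
  pdT_left_nonneg : ∀ p, 0 ≤ pdT η p
  spatialPart_left : ∀ p, spatialPart n (fderiv ℝ η p) = 0
  neg_pdT_right_le : ∀ p, -pdT χ p ≤ Sᶜ.indicator (fun _ => δ) p
  coeffForm_right_le : ∀ᵐ p ∂volume.restrict (halfSpace n),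
    coeffForm a p (fderiv ℝ χ p) (fderiv ℝ χ p) ≤ Sᶜ.indicator (fun _ => δ) p

namespace IsCutoff

variable (hc : IsCutoff a δ S K η χ)

include hc

lemma mul_pow_eq_zero (hN : N ≠ 0) {p : Pt n} (hp : p ∉ K) : η p * χ p ^ N = 0 := by
  obtain ⟨m, rfl⟩ := Nat.exists_eq_succ_of_ne_zero hN
  rw [pow_succ', ← mul_assoc, hc.mul_eq_zero p hp, zero_mul]

lemma mul_pow_nonneg (N : ℕ) (p : Pt n) : 0 ≤ η p * χ p ^ N :=
  mul_nonneg (hc.nonneg_left p) (pow_nonneg (hc.nonneg_right p) N)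

lemma isTestFunction_powerCutoff (N : ℕ) :
    IsTestFunction 1 (halfSpace n) (powerCutoff η χ N) := by
  have hsupp : tsupport (powerCutoff η χ N) ⊆ K :=
    closure_minimal (Function.support_subset_iff'.mpr fun p hp =>
      hc.mul_pow_eq_zero (Nat.succ_ne_zero _) hp) hc.isCompact.isClosed
  exact ⟨hc.contDiff_left.mul (hc.contDiff_right.pow _),
    hc.isCompact.of_isClosed_subset (isClosed_tsupport _) hsupp,
    hsupp.trans hc.subset_halfSpace, hc.mul_pow_nonneg _⟩

lemma powerCutoff_eq_one (N : ℕ) {p : Pt n} (hp : p ∈ S) : powerCutoff η χ N p = 1 := by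
  rw [powerCutoff, hc.eq_one_left p hp, hc.eq_one_right p hp, one_pow, mul_one]

lemma exteriorWeight_nonneg (N : ℕ) (p : Pt n) : 0 ≤ exteriorWeight S η χ N p :=
  Set.indicator_nonneg (fun p _ => hc.mul_pow_nonneg N p) p

lemma exteriorWeight_le (N : ℕ) (p : Pt n) : exteriorWeight S η χ N p ≤ η p * χ p ^ N :=
  Set.indicator_le_self' (fun p _ => hc.mul_pow_nonneg N p) p

lemma exteriorWeight_le_indicator (hN : N ≠ 0) (p : Pt n) :
    exteriorWeight S η χ N p ≤ K.indicator 1 p := by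
  by_cases hp : p ∈ K
  · rw [Set.indicator_of_mem hp]
    exact (hc.exteriorWeight_le N p).trans
      (mul_le_one₀ (hc.le_one_left p) (pow_nonneg (hc.nonneg_right p) N)
        (pow_le_one₀ (hc.nonneg_right p) (hc.le_one_right p)))
  · rw [Set.indicator_of_notMem hp, ← hc.mul_pow_eq_zero hN hp]
    exact hc.exteriorWeight_le N p

lemma fderiv_powerCutoff (N : ℕ) (p : Pt n) : fderiv ℝ (powerCutoff η χ N) p =
    (η p * ((N + 2) * χ p ^ (N + 1))) • fderiv ℝ χ p + χ p ^ (N + 2) • fderiv ℝ η p := by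
  have hη := (hc.contDiff_left.differentiable one_ne_zero p).hasFDerivAt
  have hχ := (hc.contDiff_right.differentiable one_ne_zero p).hasFDerivAt.pow (N + 2)
  have hmul : fderiv ℝ (powerCutoff η χ N) p = _ := (hη.mul hχ).fderiv
  simpa [smul_smul] using hmul

lemma neg_pdT_powerCutoff_le (N : ℕ) (p : Pt n) :
    -pdT (powerCutoff η χ N) p ≤ (N + 2) * δ * exteriorWeight S η χ N p := by
  have hηt : 0 ≤ χ p ^ (N + 2) * pdT η p :=
    mul_nonneg (pow_nonneg (hc.nonneg_right p) _) (hc.pdT_left_nonneg p)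
  have hδ : 0 ≤ Sᶜ.indicator (fun _ => δ) p := Set.indicator_nonneg (fun _ _ => hc.pos.le) p
  have hη := hc.nonneg_left p
  have hχ := hc.nonneg_right p
  have hχ1 := hc.le_one_right p
  calc -pdT (powerCutoff η χ N) p
      = (N + 2) * (η p * χ p ^ N * χ p * -pdT χ p) - χ p ^ (N + 2) * pdT η p := by
        simp only [pdT, hc.fderiv_powerCutoff, add_apply, smul_apply, smul_eq_mul]
        ring
    _ ≤ (N + 2) * (η p * χ p ^ N * χ p * -pdT χ p) := sub_le_self _ hηt
    _ ≤ (N + 2) * (η p * χ p ^ N * χ p * Sᶜ.indicator (fun _ => δ) p) := by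
        gcongr
        exact hc.neg_pdT_right_le p
    _ ≤ (N + 2) * (η p * χ p ^ N * 1 * Sᶜ.indicator (fun _ => δ) p) := by
        gcongr
    _ = (N + 2) * δ * exteriorWeight S η χ N p := by
        rw [mul_one, mul_pow_mul_indicator_compl, mul_assoc]

lemma coeffForm_powerCutoff_eq (N : ℕ) (p : Pt n) (L : Pt n →L[ℝ] ℝ) :
    coeffForm a p (fderiv ℝ (powerCutoff η χ N) p) L =
      η p * χ p ^ N * coeffForm a p ((N + 2 : ℝ) • fderiv ℝ χ p) (χ p • L) := by
  have hη : coeffForm a p (fderiv ℝ η p) = 0 := by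
    rw [coeffForm, LinearMap.BilinForm.comp]
    ext L
    simp [hc.spatialPart_left p]
  simp only [hc.fderiv_powerCutoff, map_add, map_smul, hη, smul_zero, add_zero,
    LinearMap.smul_apply, smul_eq_mul]
  ring

lemma coeffForm_powerCutoff_le (ha : IsDegenerateElliptic a) (N : ℕ) :
    ∀ᵐ p ∂volume.restrict (halfSpace n), ∀ (θ : ℝ) (L : Pt n →L[ℝ] ℝ), 0 < θ →
      coeffForm a p (fderiv ℝ (powerCutoff η χ N) p) L ≤
        θ * (powerCutoff η χ N p * coeffForm a p L L)
          + (N + 2) ^ 2 / (4 * θ) * δ * exteriorWeight S η χ N p := by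
  filter_upwards [ha.isPosSemidef, hc.coeffForm_right_le] with p hB hχ θ L hθ
  calc coeffForm a p (fderiv ℝ (powerCutoff η χ N) p) L
      = η p * χ p ^ N * coeffForm a p ((N + 2 : ℝ) • fderiv ℝ χ p) (χ p • L) :=
        hc.coeffForm_powerCutoff_eq N p L
    _ ≤ η p * χ p ^ N * (θ * coeffForm a p (χ p • L) (χ p • L)
          + coeffForm a p ((N + 2 : ℝ) • fderiv ℝ χ p) ((N + 2 : ℝ) • fderiv ℝ χ p) / (4 * θ)) :=
        mul_le_mul_of_nonneg_left (bilinForm_apply_le hB hθ _ _) (hc.mul_pow_nonneg N p)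
    _ = θ * (powerCutoff η χ N p * coeffForm a p L L) + (N + 2) ^ 2 / (4 * θ)
          * (η p * χ p ^ N * coeffForm a p (fderiv ℝ χ p) (fderiv ℝ χ p)) := by
        simp only [powerCutoff, map_smul, LinearMap.smul_apply, smul_eq_mul]
        ring
    _ ≤ θ * (powerCutoff η χ N p * coeffForm a p L L) + (N + 2) ^ 2 / (4 * θ)
          * (η p * χ p ^ N * Sᶜ.indicator (fun _ => δ) p) := by
        gcongr
        exact hc.mul_pow_nonneg N p
    _ = _ := by rw [mul_pow_mul_indicator_compl, mul_assoc ((N + 2 : ℝ) ^ 2 / (4 * θ))]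

end IsCutoff

end Cutoff

lemma integral_le_of_add_le {X : Type*} [MeasurableSpace X] {μ : Measure X} {f g T : X → ℝ}
    (hf : Integrable f μ) (hg : Integrable g μ) (hT : Integrable T μ) (hT0 : 0 ≤ ∫ x, T x ∂μ)
    (hle : ∀ᵐ x ∂μ, f x + T x ≤ g x) : ∫ x, f x ∂μ ≤ ∫ x, g x ∂μ :=
  calc ∫ x, f x ∂μ ≤ ∫ x, f x ∂μ + ∫ x, T x ∂μ := le_add_of_nonneg_right hT0
    _ = ∫ x, f x + T x ∂μ := (integral_add hf hT).symm
    _ ≤ ∫ x, g x ∂μ := integral_mono_ae (hf.add hT) hg hle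

lemma setIntegral_indicator_one {X : Type*} [MeasurableSpace X] {μ : Measure X} {K U : Set X}
    (hK : MeasurableSet K) (hKU : K ⊆ U) : ∫ x in U, K.indicator (1 : X → ℝ) x ∂μ = μ.real K := by
  rw [setIntegral_indicator hK, Set.inter_eq_self_of_subset_right hKU]
  simp

section Estimates

variable {n : ℕ} {a : Fin n → Fin n → Pt n → ℝ} {q κ ν δ d ε : ℝ} {S K : Set (Pt n)}
  {η χ h F : Pt n → ℝ} {N : ℕ}

lemma IsCutoff.mul_exteriorWeight_le (hc : IsCutoff a δ S K η χ) (hN : N ≠ 0) {X Y C : ℝ}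
    (hX : 0 ≤ X) (hC : 0 ≤ C) {p : Pt n} (hle : X * χ p ^ N ≤ Y * χ p ^ (N + 2) + C) :
    X * exteriorWeight S η χ N p ≤ Y * powerCutoff η χ N p + C * K.indicator 1 p := by
  by_cases hp : p ∈ K
  · rw [Set.indicator_of_mem hp, Pi.one_apply, powerCutoff]
    calc X * exteriorWeight S η χ N p ≤ X * (η p * χ p ^ N) := by
          gcongr
          exact hc.exteriorWeight_le N p
      _ = η p * (X * χ p ^ N) := by ring
      _ ≤ η p * (Y * χ p ^ (N + 2) + C) := mul_le_mul_of_nonneg_left hle (hc.nonneg_left p)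
      _ = Y * (η p * χ p ^ (N + 2)) + η p * C := by ring
      _ ≤ Y * (η p * χ p ^ (N + 2)) + C * 1 := by
          rw [mul_one]
          gcongr
          exact mul_le_of_le_one_left hC (hc.le_one_left p)
  · have hψ : powerCutoff η χ N p = 0 := hc.mul_pow_eq_zero (Nat.succ_ne_zero _) hp
    rw [hψ, Set.indicator_of_notMem hp, mul_zero, mul_zero, add_zero]
    refine mul_nonpos_of_nonneg_of_nonpos hX ?_
    simpa only [Set.indicator_of_notMem hp] using hc.exteriorWeight_le_indicator hN p

lemma IsCutoff.mul_exteriorWeight_le_indicator (hc : IsCutoff a δ S K η χ) (hN : N ≠ 0)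
    {f : Pt n → ℝ} {p : Pt n} (hf : 0 ≤ f p) :
    f p * exteriorWeight S η χ N p ≤ Sᶜ.indicator f p := by
  by_cases hp : p ∈ S
  · simp [exteriorWeight, hp]
  · rw [Set.indicator_of_mem (by exact hp)]
    exact mul_le_of_le_one_right hf ((hc.exteriorWeight_le_indicator hN p).trans
      (Set.indicator_le_self' (fun _ _ => zero_le_one) p))

lemma IsCutoff.integrableOn_indicator (hc : IsCutoff a δ S K η χ) :
    IntegrableOn (K.indicator (1 : Pt n → ℝ)) (halfSpace n) :=
  ((LocallyBoundedOn.const 1).indicator hc.isCompact.measurableSet).integrableOn hc.isCompact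
    hc.subset_halfSpace fun _ hp => Set.indicator_of_notMem hp _

lemma IsCutoff.integral_indicator (hc : IsCutoff a δ S K η χ) :
    ∫ p in halfSpace n, K.indicator 1 p = volume.real K :=
  setIntegral_indicator_one hc.isCompact.measurableSet hc.subset_halfSpace

namespace IsNonnegSupersolution

lemma energyDensity_add_testedIntegrand_le (ha : IsDegenerateElliptic a)
    (hc : IsCutoff a δ S K η χ) (hh : IsNonnegSupersolution a q δ h) (hd : 0 < d) (hν : 0 < ν)
    (hν1 : ν < 1) (N : ℕ) : ∀ᵐ p ∂volume.restrict (halfSpace n),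
      ν / 2 * energyDensity a ν d h (powerCutoff η χ N) p
        + testedIntegrand a q δ ν d h (powerCutoff η χ N) p ≤
      δ * (((N + 2) / (1 - ν) + (N + 2) ^ 2 / (2 * ν)) * (h p + d) ^ (1 - ν)
          * exteriorWeight S η χ N p
        - h p ^ q * (h p + d) ^ (-ν) * powerCutoff η χ N p) := by
  filter_upwards [hc.coeffForm_powerCutoff_le ha N, ae_restrict_mem (measurableSet_halfSpace n)]
    with p hform hp
  have hH : 0 < h p + d := add_pos_of_nonneg_of_pos (hh.nonneg p hp) hd
  have hsucc : (h p + d) ^ (1 - ν) = (h p + d) * (h p + d) ^ (-ν) := by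
    rw [sub_eq_add_neg, Real.rpow_add hH, Real.rpow_one]
  have htime := mul_le_mul_of_nonneg_left (hc.neg_pdT_powerCutoff_le N p)
    (div_nonneg (Real.rpow_nonneg hH.le (1 - ν)) (sub_nonneg.mpr hν1.le))
  have hspace := mul_le_mul_of_nonneg_left (hform (ν / (2 * (h p + d))) (fderiv ℝ h p)
    (by positivity)) (Real.rpow_nonneg hH.le (-ν))
  have hsplit : (h p + d) ^ (-ν) * (ν / (2 * (h p + d)) * (powerCutoff η χ N p
        * coeffForm a p (fderiv ℝ h p) (fderiv ℝ h p))
        + (N + 2) ^ 2 / (4 * (ν / (2 * (h p + d)))) * δ * exteriorWeight S η χ N p) =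
      ν / 2 * energyDensity a ν d h (powerCutoff η χ N) p
        + δ * ((N + 2) ^ 2 / (2 * ν) * (h p + d) ^ (1 - ν) * exteriorWeight S η χ N p) := by
    rw [energyDensity, hsucc, Real.rpow_sub_one hH.ne']
    field_simp
    ring
  rw [hsplit] at hspace
  rw [testedIntegrand]
  linear_combination htime + hspace

lemma mass_sub_energyDensity_add_testedIntegrand_le (ha : IsDegenerateElliptic a)
    (hc : IsCutoff a δ S K η χ) (hh : IsNonnegSupersolution a q δ h) (hd : 0 < d) (hε : 0 < ε)
    (ν : ℝ) (N : ℕ) : ∀ᵐ p ∂volume.restrict (halfSpace n),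
      δ * (h p ^ q * powerCutoff η χ N p) - ε * energyDensity a ν d h (powerCutoff η χ N) p
        + testedIntegrand a q δ 0 d h (powerCutoff η χ N) p ≤
      δ * (((N + 2) * (h p + d) + (N + 2) ^ 2 / (4 * ε) * (h p + d) ^ (1 + ν))
        * exteriorWeight S η χ N p) := by
  filter_upwards [hc.coeffForm_powerCutoff_le ha N, ae_restrict_mem (measurableSet_halfSpace n)]
    with p hform hp
  have hH : 0 < h p + d := add_pos_of_nonneg_of_pos (hh.nonneg p hp) hd
  have htime := mul_le_mul_of_nonneg_left (hc.neg_pdT_powerCutoff_le N p) hH.le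
  have hspace := hform (ε * (h p + d) ^ (-ν - 1)) (fderiv ℝ h p) (by positivity)
  have hinv : ((h p + d) ^ (-ν - 1))⁻¹ = (h p + d) ^ (1 + ν) := by
    rw [← Real.rpow_neg hH.le]
    ring_nf
  have hcoeff : (N + 2 : ℝ) ^ 2 / (4 * (ε * (h p + d) ^ (-ν - 1))) =
      (N + 2) ^ 2 / (4 * ε) * (h p + d) ^ (1 + ν) := by
    rw [← hinv]
    field_simp
  rw [hcoeff] at hspace
  simp only [testedIntegrand, energyDensity, sub_zero, neg_zero, Real.rpow_one, Real.rpow_zero,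
    div_one, one_mul, zero_mul]
  linear_combination htime + hspace

lemma integrableOn_rpow_mul_powerCutoff (hc : IsCutoff a δ S K η χ)
    (hh : IsNonnegSupersolution a q κ h) (hq : 0 ≤ q) (N : ℕ) :
    IntegrableOn (fun p => h p ^ q * powerCutoff η χ N p) (halfSpace n) := by
  have hψ := hc.isTestFunction_powerCutoff N
  exact ((hh.locallyBoundedOn_rpow hq).mul (.of_continuousOn hψ.contDiff.continuous.continuousOn
    (measurableSet_halfSpace n))).integrableOn hψ.hasCompactSupport.isCompact hψ.tsupport_subset
    fun p hp => by rw [image_eq_zero_of_notMem_tsupport hp, mul_zero]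

lemma exists_integral_energyDensity_le (ha : IsDegenerateElliptic a)
    (hN : AdmissibleExponents q ν N) : ∃ C, 0 ≤ C ∧ ∀ {δ S K η χ h d}, IsCutoff a δ S K η χ →
      IsNonnegSupersolution a q δ h → 0 < d → d ≤ 1 →
      ∫ p in halfSpace n, energyDensity a ν d h (powerCutoff η χ N) p ≤
        δ * (C * volume.real K) := by
  have hν := hN.pos
  have hν1 := hN.lt_one
  have hνq := hN.one_add_lt
  have hk : 0 ≤ (N + 2) / (1 - ν) + (N + 2 : ℝ) ^ 2 / (2 * ν) :=
    add_nonneg (div_nonneg (by positivity) (by linarith)) (by positivity)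
  obtain ⟨C, hC, hyoung⟩ := exists_mul_add_rpow_mul_pow_le (q := q) (s := -ν) (p := 1 - ν)
    (by linarith) (by linarith) (by linarith) (by linarith)
    (hN.two_mul_le_of_le (by linarith) (by linarith)) hk one_pos
  refine ⟨2 / ν * C, by positivity, fun {δ S K η χ h d} hc hh hd hd1 => ?_⟩
  have hψ := hc.isTestFunction_powerCutoff N
  have hle : ∫ p in halfSpace n, ν / 2 * energyDensity a ν d h (powerCutoff η χ N) p ≤
      ∫ p in halfSpace n, δ * (C * K.indicator 1 p) := by
    refine integral_le_of_add_le ((hh.integrableOn_energyDensity ha hψ hd).const_mul _)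
      ((hc.integrableOn_indicator.const_mul _).const_mul _)
      (hh.integrableOn_testedIntegrand (by linarith) ha hψ hd hν1.ne)
      (hh.integral_testedIntegrand_nonneg (by linarith) ha hψ hd hν1.ne) ?_
    filter_upwards [hh.energyDensity_add_testedIntegrand_le ha hc hd hν hν1 N,
      ae_restrict_mem (measurableSet_halfSpace n)] with p htested hp
    have hh0 := hh.nonneg p hp
    refine htested.trans (mul_le_mul_of_nonneg_left ?_ hc.pos.le)
    rw [sub_le_iff_le_add']
    refine hc.mul_exteriorWeight_le hN.ne_zero (by positivity) hC ?_
    simpa only [one_mul] using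
      hyoung (h p) d (χ p) hh0 hd hd1 (hc.nonneg_right p) (hc.le_one_right p)
  rw [integral_const_mul, integral_const_mul, integral_const_mul, hc.integral_indicator] at hle
  rw [div_mul_eq_mul_div, div_mul_eq_mul_div, mul_div_assoc', le_div_iff₀ hν]
  linarith

lemma integral_mass_le (ha : IsDegenerateElliptic a) (hc : IsCutoff a δ S K η χ)
    (hh : IsNonnegSupersolution a q δ h) (hq : 0 ≤ q) (hd : 0 < d) (hε : 0 < ε)
    (hF : IntegrableOn F (halfSpace n))
    (hle : ∀ p ∈ halfSpace n, ((N + 2) * (h p + d) + (N + 2) ^ 2 / (4 * ε) * (h p + d) ^ (1 + ν))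
      * exteriorWeight S η χ N p ≤ F p) :
    δ * ∫ p in halfSpace n, h p ^ q * powerCutoff η χ N p ≤
      ε * (∫ p in halfSpace n, energyDensity a ν d h (powerCutoff η χ N) p)
        + δ * ∫ p in halfSpace n, F p := by
  have hψ := hc.isTestFunction_powerCutoff N
  have hmass := (hh.integrableOn_rpow_mul_powerCutoff hc hq N).const_mul δ
  have henergy := (hh.integrableOn_energyDensity (ν := ν) ha hψ hd).const_mul ε
  have hsub := integral_le_of_add_le (hmass.sub henergy) (hF.const_mul δ)
    (hh.integrableOn_testedIntegrand hq ha hψ hd zero_ne_one)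
    (hh.integral_testedIntegrand_nonneg hq ha hψ hd zero_ne_one) <| by
      filter_upwards [hh.mass_sub_energyDensity_add_testedIntegrand_le ha hc hd hε ν N,
        ae_restrict_mem (measurableSet_halfSpace n)] with p htested hp
      exact htested.trans (mul_le_mul_of_nonneg_left (hle p hp) hc.pos.le)
  simp only [Pi.sub_apply] at hsub
  rw [integral_sub hmass henergy, integral_const_mul, integral_const_mul,
    integral_const_mul] at hsub
  linarith

lemma exists_integral_mass_le (ha : IsDegenerateElliptic a) (hN : AdmissibleExponents q ν N) :
    ∃ C, 0 ≤ C ∧ ∀ {δ S K η χ h}, IsCutoff a δ S K η χ → IsNonnegSupersolution a q δ h →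
      ∫ p in halfSpace n, h p ^ q * powerCutoff η χ N p ≤ C * volume.real K := by
  have hν := hN.pos
  have hνq := hN.one_add_lt
  obtain ⟨C, hC, henergy⟩ := exists_integral_energyDensity_le ha hN
  obtain ⟨C₁, hC₁, hyoung₁⟩ := exists_mul_add_rpow_mul_pow_le (q := q) (s := 0) (p := 1)
    (N := N) (k := N + 2) (ε := 1 / 4) (by linarith) le_rfl zero_le_one (by linarith)
    (hN.two_mul_le_of_le (by linarith) (by linarith)) (by positivity) (by norm_num)
  obtain ⟨C₂, hC₂, hyoung₂⟩ := exists_mul_add_rpow_mul_pow_le (q := q) (s := 0) (p := 1 + ν)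
    (N := N) (k := (N + 2) ^ 2 / (4 * 1)) (ε := 1 / 4) (by linarith) le_rfl (by linarith)
    (by linarith) (hN.two_mul_le_of_le le_rfl (by linarith)) (by positivity) (by norm_num)
  simp only [Real.rpow_one, Real.rpow_zero, mul_one] at hyoung₁ hyoung₂
  refine ⟨2 * (C + C₁ + C₂), by positivity, fun {δ S K η χ h} hc hh => ?_⟩
  have hmass := hh.integrableOn_rpow_mul_powerCutoff hc (by linarith) N
  have hle := hh.integral_mass_le (ν := ν) (N := N) ha hc (by linarith) one_pos one_pos
    (F := fun p => 1 / 2 * (h p ^ q * powerCutoff η χ N p) + (C₁ + C₂) * K.indicator 1 p)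
    ((hmass.const_mul _).add (hc.integrableOn_indicator.const_mul _)) fun p hp => by
      have hh0 := hh.nonneg p hp
      have hsum := add_le_add
        (hyoung₁ (h p) 1 (χ p) hh0 one_pos le_rfl (hc.nonneg_right p) (hc.le_one_right p))
        (hyoung₂ (h p) 1 (χ p) hh0 one_pos le_rfl (hc.nonneg_right p) (hc.le_one_right p))
      rw [← mul_assoc]
      refine hc.mul_exteriorWeight_le hN.ne_zero (by positivity) (by positivity) ?_
      linear_combination hsum
  rw [integral_add (hmass.const_mul _) (hc.integrableOn_indicator.const_mul _),
    integral_const_mul, integral_const_mul, hc.integral_indicator, one_mul] at hle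
  refine le_of_mul_le_mul_left ?_ hc.pos
  linear_combination 2 * hle + 2 * henergy hc hh one_pos le_rfl

lemma exists_integral_mass_le_tail (ha : IsDegenerateElliptic a) (hN : AdmissibleExponents q ν N)
    (hε : 0 < ε) :
    ∃ C, 0 ≤ C ∧ ∀ {δ S K η χ h}, IsCutoff a δ S K η χ → IsNonnegSupersolution a q δ h →
      IntegrableOn (fun p => h p ^ q) (halfSpace n) →
      ∫ p in halfSpace n, h p ^ q * powerCutoff η χ N p ≤
        ε * volume.real K + C * ∫ p in halfSpace n, Sᶜ.indicator (fun p => h p ^ q) p := by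
  have hν := hN.pos
  have hνq := hN.one_add_lt
  obtain ⟨C₀, hC₀, henergy⟩ := exists_integral_energyDensity_le ha hN
  obtain ⟨γ, hγ, hγε⟩ : ∃ γ, 0 < γ ∧ γ * (C₀ + 2) = ε :=
    ⟨ε / (C₀ + 2), by positivity, div_mul_cancel₀ _ (by positivity)⟩
  have hd_small : ∀ᶠ d : ℝ in nhdsWithin 0 (Set.Ioi 0), 0 < d ∧ d ≤ 1 :=
    Filter.mem_of_superset (Ioc_mem_nhdsGT one_pos) fun _ hd => hd
  obtain ⟨d, ⟨hd, hd1⟩, ⟨C₁, hC₁, hyoung₁⟩, ⟨C₂, hC₂, hyoung₂⟩⟩ := (hd_small.and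
    ((eventually_exists_mul_add_rpow_le (q := q) (k := N + 2) one_pos (by linarith)
      (by positivity) hγ).and (eventually_exists_mul_add_rpow_le (q := q)
      (k := (N + 2) ^ 2 / (4 * γ)) (p := 1 + ν) (by linarith) (by linarith) (by positivity)
      hγ))).exists
  simp only [Real.rpow_one] at hyoung₁
  refine ⟨C₁ + C₂, by positivity, fun {δ S K η χ h} hc hh hint => ?_⟩
  have htail := hint.indicator hc.measurableSet.compl
  have hle := hh.integral_mass_le (ν := ν) (N := N) ha hc (by linarith) hd hγ
    (F := fun p => 2 * γ * K.indicator 1 p + (C₁ + C₂) * Sᶜ.indicator (fun p => h p ^ q) p)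
    ((hc.integrableOn_indicator.const_mul _).add (htail.const_mul _)) fun p hp => by
      have hh0 := hh.nonneg p hp
      have hw := hc.exteriorWeight_le_indicator hN.ne_zero p
      calc ((N + 2) * (h p + d) + (N + 2) ^ 2 / (4 * γ) * (h p + d) ^ (1 + ν))
            * exteriorWeight S η χ N p
          ≤ (γ + C₁ * h p ^ q + (γ + C₂ * h p ^ q)) * exteriorWeight S η χ N p :=
            mul_le_mul_of_nonneg_right (add_le_add (hyoung₁ (h p) hh0) (hyoung₂ (h p) hh0))
              (hc.exteriorWeight_nonneg N p)
        _ = 2 * γ * exteriorWeight S η χ N p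
              + (C₁ + C₂) * (h p ^ q * exteriorWeight S η χ N p) := by ring
        _ ≤ 2 * γ * K.indicator 1 p + (C₁ + C₂) * Sᶜ.indicator (fun p => h p ^ q) p := by
            gcongr
            exact hc.mul_exteriorWeight_le_indicator (f := fun p => h p ^ q) hN.ne_zero
              (Real.rpow_nonneg hh0 q)
  rw [integral_add (hc.integrableOn_indicator.const_mul _) (htail.const_mul _),
    integral_const_mul, integral_const_mul, hc.integral_indicator] at hle
  refine le_of_mul_le_mul_left ?_ hc.pos
  rw [← hγε]
  linear_combination hle + γ * henergy hc hh hd hd1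

end IsNonnegSupersolution

end Estimates

/-! ### A Liouville theorem -/

section Liouville

variable {n : ℕ} {a : Fin n → Fin n → Pt n → ℝ} {q ν κ δ ε : ℝ} {S K : Set (Pt n)}
  {η χ w : Pt n → ℝ} {N : ℕ}

namespace IsNonnegSupersolution

lemma exists_rescaling (hw : IsNonnegSupersolution a q κ w) (hq : 1 < q) (hκ : 0 < κ)
    (hδ : 0 < δ) : ∃ h, IsNonnegSupersolution a q δ h ∧
      ∀ p ∈ halfSpace n, w p ^ q = (δ / κ) ^ (q / (q - 1)) * h p ^ q := by
  have hq1 : q - 1 ≠ 0 := (sub_pos.mpr hq).ne'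
  set m : ℝ := (κ / δ) ^ (1 / (q - 1))
  have hm : 0 < m := by positivity
  have hmδ : κ / m ^ (q - 1) = δ := by
    rw [← Real.rpow_mul (by positivity), one_div_mul_cancel hq1, Real.rpow_one]
    field_simp
  have hmq : (δ / κ) ^ (q / (q - 1)) * m ^ q = 1 := by
    rw [← Real.rpow_mul (by positivity), one_div_mul_eq_div, ← Real.mul_rpow (by positivity)
      (by positivity), div_mul_div_cancel₀ hκ.ne', div_self hδ.ne', Real.one_rpow]
  refine ⟨fun p => m * w p, hmδ ▸ hw.const_mul hm, fun p hp => ?_⟩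
  rw [Real.mul_rpow hm.le (hw.nonneg p hp), ← mul_assoc, hmq, one_mul]

lemma exists_integral_le_rescaled (ha : IsDegenerateElliptic a) (hN : AdmissibleExponents q ν N) :
    ∃ C, 0 ≤ C ∧ ∀ {κ δ S K η χ w}, 0 < κ → IsCutoff a δ S K η χ →
      IsNonnegSupersolution a q κ w →
      ∫ p in halfSpace n, w p ^ q * powerCutoff η χ N p ≤
        C * ((δ / κ) ^ (q / (q - 1)) * volume.real K) := by
  obtain ⟨C, hC, hmass⟩ := exists_integral_mass_le ha hN
  refine ⟨C, hC, fun {κ δ S K η χ w} hκ hc hw => ?_⟩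
  obtain ⟨h, hh, hwh⟩ := hw.exists_rescaling hN.one_lt hκ hc.pos
  calc ∫ p in halfSpace n, w p ^ q * powerCutoff η χ N p
      = (δ / κ) ^ (q / (q - 1)) * ∫ p in halfSpace n, h p ^ q * powerCutoff η χ N p := by
        rw [← integral_const_mul]
        refine setIntegral_congr_fun (measurableSet_halfSpace n) fun p hp => ?_
        simp only [hwh p hp, mul_assoc]
    _ ≤ (δ / κ) ^ (q / (q - 1)) * (C * volume.real K) :=
        mul_le_mul_of_nonneg_left (hmass hc hh) (Real.rpow_nonneg (div_pos hc.pos hκ).le _)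
    _ = _ := mul_left_comm _ _ _

lemma exists_integral_le_rescaled_tail (ha : IsDegenerateElliptic a)
    (hN : AdmissibleExponents q ν N) (hε : 0 < ε) :
    ∃ C, 0 ≤ C ∧ ∀ {κ δ S K η χ w}, 0 < κ → IsCutoff a δ S K η χ →
      IsNonnegSupersolution a q κ w → IntegrableOn (fun p => w p ^ q) (halfSpace n) →
      ∫ p in halfSpace n, w p ^ q * powerCutoff η χ N p ≤
        ε * ((δ / κ) ^ (q / (q - 1)) * volume.real K)
          + C * ∫ p in halfSpace n, Sᶜ.indicator (fun p => w p ^ q) p := by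
  obtain ⟨C, hC, htail⟩ := exists_integral_mass_le_tail ha hN hε
  refine ⟨C, hC, fun {κ δ S K η χ w} hκ hc hw hint => ?_⟩
  obtain ⟨h, hh, hwh⟩ := hw.exists_rescaling hN.one_lt hκ hc.pos
  have hσ : 0 < (δ / κ) ^ (q / (q - 1)) := Real.rpow_pos_of_pos (div_pos hc.pos hκ) _
  set σ := (δ / κ) ^ (q / (q - 1))
  have hhint : IntegrableOn (fun p => h p ^ q) (halfSpace n) :=
    IntegrableOn.congr_fun (hint.const_mul σ⁻¹)
      (fun p hp => by simp only [hwh p hp, inv_mul_cancel_left₀ hσ.ne'])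
      (measurableSet_halfSpace n)
  have hmass : ∫ p in halfSpace n, w p ^ q * powerCutoff η χ N p =
      σ * ∫ p in halfSpace n, h p ^ q * powerCutoff η χ N p := by
    rw [← integral_const_mul]
    refine setIntegral_congr_fun (measurableSet_halfSpace n) fun p hp => ?_
    simp only [hwh p hp, mul_assoc]
  have htails : ∫ p in halfSpace n, Sᶜ.indicator (fun p => w p ^ q) p =
      σ * ∫ p in halfSpace n, Sᶜ.indicator (fun p => h p ^ q) p := by
    rw [← integral_const_mul]
    refine setIntegral_congr_fun (measurableSet_halfSpace n) fun p hp => ?_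
    by_cases hpS : p ∈ Sᶜ
    · simpa only [Set.indicator_of_mem hpS] using hwh p hp
    · simp only [Set.indicator_of_notMem hpS, mul_zero]
  rw [hmass, htails]
  linear_combination mul_le_mul_of_nonneg_left (htail hc hh hhint) hσ.le

lemma integrableOn_rpow_core (hw : IsNonnegSupersolution a q κ w) (hc : IsCutoff a δ S K η χ)
    (hq : 0 ≤ q) : IntegrableOn (fun p => w p ^ q) S (volume.restrict (halfSpace n)) :=
  IntegrableOn.congr_fun (hw.integrableOn_rpow_mul_powerCutoff hc hq 0).integrable.integrableOn
    (fun p hp => by simp only [hc.powerCutoff_eq_one 0 hp, mul_one]) hc.measurableSet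

lemma integral_rpow_core_le (hw : IsNonnegSupersolution a q κ w) (hc : IsCutoff a δ S K η χ)
    (hq : 0 ≤ q) (N : ℕ) : ∫ p in S, w p ^ q ∂volume.restrict (halfSpace n) ≤
      ∫ p in halfSpace n, w p ^ q * powerCutoff η χ N p := by
  have hcore : Set.EqOn (fun p => w p ^ q * powerCutoff η χ N p) (fun p => w p ^ q) S :=
    fun p hp => by simp only [hc.powerCutoff_eq_one N hp, mul_one]
  rw [← setIntegral_congr_fun hc.measurableSet hcore]
  refine setIntegral_le_integral (hw.integrableOn_rpow_mul_powerCutoff hc hq N) ?_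
  filter_upwards [ae_restrict_mem (measurableSet_halfSpace n)] with p hp
  exact mul_nonneg (Real.rpow_nonneg (hw.nonneg p hp) q)
    ((hc.isTestFunction_powerCutoff N).nonneg p)

variable {ι : Type*} {l : Filter ι} [l.NeBot] [l.IsCountablyGenerated] {δ : ι → ℝ}
  {S K : ι → Set (Pt n)} {η χ : ι → Pt n → ℝ} {B : ℝ}

lemma integrableOn_rpow (hw : IsNonnegSupersolution a q κ w) (hq : 1 < q)
    (ha : IsDegenerateElliptic a) (hκ : 0 < κ) (hc : ∀ i, IsCutoff a (δ i) (S i) (K i) (η i) (χ i))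
    (hcover : AECover (volume.restrict (halfSpace n)) l S)
    (hB : ∀ i, (δ i / κ) ^ (q / (q - 1)) * volume.real (K i) ≤ B) :
    IntegrableOn (fun p => w p ^ q) (halfSpace n) := by
  obtain ⟨ν, N, hN⟩ := exists_admissibleExponents hq
  obtain ⟨C, hC, hmass⟩ := exists_integral_le_rescaled ha hN
  have hq0 : 0 ≤ q := by linarith
  refine hcover.integrable_of_integral_norm_bounded (C * B)
    (fun i => hw.integrableOn_rpow_core (hc i) hq0) (.of_forall fun i => ?_)
  have hnorm : (fun p => ‖w p ^ q‖) =ᵐ[volume.restrict (halfSpace n)] fun p => w p ^ q := by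
    filter_upwards [ae_restrict_mem (measurableSet_halfSpace n)] with p hp
    exact Real.norm_of_nonneg (Real.rpow_nonneg (hw.nonneg p hp) q)
  calc ∫ p in S i, ‖w p ^ q‖ ∂volume.restrict (halfSpace n)
      = ∫ p in S i, w p ^ q ∂volume.restrict (halfSpace n) :=
        integral_congr_ae (ae_restrict_of_ae hnorm)
    _ ≤ ∫ p in halfSpace n, w p ^ q * powerCutoff (η i) (χ i) N p :=
        hw.integral_rpow_core_le (hc i) hq0 N
    _ ≤ C * ((δ i / κ) ^ (q / (q - 1)) * volume.real (K i)) := hmass hκ (hc i) hw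
    _ ≤ C * B := mul_le_mul_of_nonneg_left (hB i) hC

lemma integral_rpow_nonpos (hw : IsNonnegSupersolution a q κ w) (hq : 1 < q)
    (ha : IsDegenerateElliptic a) (hκ : 0 < κ) (hc : ∀ i, IsCutoff a (δ i) (S i) (K i) (η i) (χ i))
    (hcover : AECover (volume.restrict (halfSpace n)) l S)
    (hB : ∀ i, (δ i / κ) ^ (q / (q - 1)) * volume.real (K i) ≤ B) :
    ∫ p in halfSpace n, w p ^ q ≤ 0 := by
  obtain ⟨ν, N, hN⟩ := exists_admissibleExponents hq
  have hint := hw.integrableOn_rpow hq ha hκ hc hcover hB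
  rw [← neg_nonneg]
  refine nonneg_of_forall_pos_add_mul (b := B) fun ε hε => ?_
  obtain ⟨C, -, htail⟩ := exists_integral_le_rescaled_tail ha hN hε
  have hbound (i : ι) : ∫ p in S i, w p ^ q ∂volume.restrict (halfSpace n) ≤
      ε * B + C * ((∫ p in halfSpace n, w p ^ q)
        - ∫ p in S i, w p ^ q ∂volume.restrict (halfSpace n)) := by
    have hcompl := integral_add_compl (hc i).measurableSet hint.integrable
    rw [← integral_indicator (hc i).measurableSet.compl] at hcompl
    rw [← hcompl, add_sub_cancel_left]
    calc ∫ p in S i, w p ^ q ∂volume.restrict (halfSpace n)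
        ≤ ∫ p in halfSpace n, w p ^ q * powerCutoff (η i) (χ i) N p :=
          hw.integral_rpow_core_le (hc i) (by linarith) N
      _ ≤ _ := htail hκ (hc i) hw hint
      _ ≤ _ := by
          gcongr
          exact hB i
  have hlim := hcover.integral_tendsto_of_countably_generated hint.integrable
  have hle := le_of_tendsto_of_tendsto' hlim
    (((hlim.const_sub _).const_mul C).const_add (ε * B)) hbound
  rw [sub_self, mul_zero, add_zero] at hle
  linarith

theorem eq_zero_of_isCutoff (hw : IsNonnegSupersolution a q κ w) (hq : 1 < q)
    (ha : IsDegenerateElliptic a) (hκ : 0 < κ) (hc : ∀ i, IsCutoff a (δ i) (S i) (K i) (η i) (χ i))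
    (hcover : AECover (volume.restrict (halfSpace n)) l S)
    (hB : ∀ i, (δ i / κ) ^ (q / (q - 1)) * volume.real (K i) ≤ B) :
    ∀ p ∈ halfSpace n, w p = 0 := by
  have hnonneg : 0 ≤ᵐ[volume.restrict (halfSpace n)] fun p => w p ^ q := by
    filter_upwards [ae_restrict_mem (measurableSet_halfSpace n)] with p hp
    exact Real.rpow_nonneg (hw.nonneg p hp) q
  have hzero : (fun p => w p ^ q) =ᵐ[volume.restrict (halfSpace n)] 0 :=
    (setIntegral_eq_zero_iff_of_nonneg_ae hnonneg (hw.integrableOn_rpow hq ha hκ hc hcover hB)).mp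
      ((hw.integral_rpow_nonpos hq ha hκ hc hcover hB).antisymm (integral_nonneg_of_ae hnonneg))
  have hw_ae : w =ᵐ[volume.restrict (halfSpace n)] 0 := by
    filter_upwards [hzero, ae_restrict_mem (measurableSet_halfSpace n)] with p hp0 hp
    exact ((Real.rpow_eq_zero_iff_of_nonneg (hw.nonneg p hp)).mp hp0).1
  exact Measure.eqOn_open_of_ae_eq hw_ae (isOpen_halfSpace n) hw.contDiffOn.continuousOn
    continuousOn_const

end IsNonnegSupersolution

end Liouville

/-! ### Parabolic cutoffs -/

section SmoothStepDown

/-- A smooth step down, equal to `1` on `(-∞, 1/3]` and to `0` on `[2/3, ∞)`. -/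
def smoothStepDown (s : ℝ) : ℝ := smoothTransition (2 - 3 * s)

lemma contDiff_smoothStepDown {k : ℕ∞} : ContDiff ℝ k smoothStepDown :=
  smoothTransition.contDiff.comp (by fun_prop)

lemma smoothStepDown_nonneg (s : ℝ) : 0 ≤ smoothStepDown s := smoothTransition.nonneg _

lemma smoothStepDown_le_one (s : ℝ) : smoothStepDown s ≤ 1 := smoothTransition.le_one _

lemma smoothStepDown_eq_one {s : ℝ} (hs : s ≤ 1 / 3) : smoothStepDown s = 1 :=
  smoothTransition.one_of_one_le (by linarith)

lemma smoothStepDown_eq_zero {s : ℝ} (hs : 2 / 3 ≤ s) : smoothStepDown s = 0 :=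
  smoothTransition.zero_of_nonpos (by linarith)

lemma deriv_smoothStepDown_of_le {s : ℝ} (hs : s ≤ 1 / 3) : deriv smoothStepDown s = 0 :=
  IsLocalMax.deriv_eq_zero (.of_forall fun t =>
    (smoothStepDown_le_one t).trans_eq (smoothStepDown_eq_one hs).symm)

lemma deriv_smoothStepDown_of_ge {s : ℝ} (hs : 2 / 3 ≤ s) : deriv smoothStepDown s = 0 :=
  IsLocalMin.deriv_eq_zero (.of_forall fun t =>
    (smoothStepDown_eq_zero hs).trans_le (smoothStepDown_nonneg t))

lemma exists_abs_deriv_smoothStepDown_le : ∃ M, 0 < M ∧ ∀ s, |deriv smoothStepDown s| ≤ M := by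
  obtain ⟨M, hM⟩ := (isCompact_Icc (a := (1 / 3 : ℝ)) (b := 2 / 3)).exists_bound_of_continuousOn
    (contDiff_smoothStepDown.continuous_deriv le_rfl).continuousOn
  refine ⟨max M 1, by positivity, fun s => ?_⟩
  by_cases hs : s ∈ Set.Icc (1 / 3 : ℝ) (2 / 3)
  · exact (hM s hs).trans (le_max_left _ _)
  · have hzero : deriv smoothStepDown s = 0 := by
      rcases le_or_gt s (1 / 3) with hs' | hs'
      · exact deriv_smoothStepDown_of_le hs'
      · exact deriv_smoothStepDown_of_ge (not_lt.mp fun h => hs ⟨hs'.le, h.le⟩)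
    rw [hzero, abs_zero]
    positivity

end SmoothStepDown

section RadialProduct

variable {n : ℕ} {f g : ℝ → ℝ} {p : Pt n}

/-- The function `f t * g (|x|²)` on space-time. -/
def radialProduct (n : ℕ) (f g : ℝ → ℝ) (p : Pt n) : ℝ := f p.1 * g (‖p.2‖ ^ 2)

lemma contDiff_radialProduct {k : ℕ∞} (hf : ContDiff ℝ k f) (hg : ContDiff ℝ k g) :
    ContDiff ℝ k (radialProduct n f g) :=
  (hf.comp contDiff_fst).mul (hg.comp (contDiff_snd.norm_sq ℝ))

lemma fderiv_radialProduct_apply (hf : DifferentiableAt ℝ f p.1)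
    (hg : DifferentiableAt ℝ g (‖p.2‖ ^ 2)) (v : Pt n) :
    fderiv ℝ (radialProduct n f g) p v = deriv f p.1 * g (‖p.2‖ ^ 2) * v.1
      + 2 * f p.1 * deriv g (‖p.2‖ ^ 2) * inner ℝ p.2 v.2 := by
  have hnorm : HasFDerivAt (fun p : Pt n => ‖p.2‖ ^ 2)
      (2 • (innerSL ℝ p.2).comp (ContinuousLinearMap.snd ℝ ℝ (Xn n))) p :=
    HasFDerivAt.norm_sq (f := fun p : Pt n => p.2) hasFDerivAt_snd
  have hmul : fderiv ℝ (radialProduct n f g) p = _ :=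
    ((hf.hasDerivAt.comp_hasFDerivAt p hasFDerivAt_fst).mul
      (hg.hasDerivAt.comp_hasFDerivAt p hnorm)).fderiv
  rw [hmul]
  simp only [Function.comp_apply, add_apply, smul_apply, ContinuousLinearMap.comp_apply,
    ContinuousLinearMap.coe_snd', coe_innerSL_apply, nsmul_eq_mul, Nat.cast_ofNat, smul_eq_mul,
    ContinuousLinearMap.coe_fst']
  ring

lemma pdT_radialProduct (hf : DifferentiableAt ℝ f p.1) (hg : DifferentiableAt ℝ g (‖p.2‖ ^ 2)) :
    pdT (radialProduct n f g) p = deriv f p.1 * g (‖p.2‖ ^ 2) := by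
  simp [pdT, fderiv_radialProduct_apply hf hg]

lemma spatialPart_fderiv_radialProduct (hf : DifferentiableAt ℝ f p.1)
    (hg : DifferentiableAt ℝ g (‖p.2‖ ^ 2)) : spatialPart n (fderiv ℝ (radialProduct n f g) p) =
      ((2 * f p.1 * deriv g (‖p.2‖ ^ 2)) • p.2 : Xn n) := by
  ext i
  simp [spatialPart, fderiv_radialProduct_apply hf hg, EuclideanSpace.inner_single_right]

end RadialProduct

section ParabolicCutoff

variable {n : ℕ} {a : Fin n → Fin n → Pt n → ℝ} {A : Pt n → ℝ} {R T M α c : ℝ} {p : Pt n}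

/-- The cutoff removing the initial layer `t ≤ 1/R`. -/
def initialCutoff (n : ℕ) (R : ℝ) : Pt n → ℝ :=
  radialProduct n (fun t => smoothTransition (R * t - 1)) fun _ => 1

/-- The cutoff removing the times `t ≥ T` and the points `|x| ≥ R`. -/
def farCutoff (n : ℕ) (R T : ℝ) : Pt n → ℝ :=
  radialProduct n (fun t => smoothStepDown (T⁻¹ * t)) fun s => smoothStepDown ((R ^ 2)⁻¹ * s)

/-- The region where both `initialCutoff n R` and `farCutoff n R T` are equal to `1`. -/
def cutoffCore (n : ℕ) (R T : ℝ) : Set (Pt n) :=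
  Set.Icc (2 / R) (T / 3) ×ˢ Metric.closedBall 0 (R / 2)

/-- A compact set containing the support of `initialCutoff n R * farCutoff n R T`. -/
def cutoffBox (n : ℕ) (R T : ℝ) : Set (Pt n) := Set.Icc (1 / R) T ×ˢ Metric.closedBall 0 R

lemma contDiff_initialCutoff : ContDiff ℝ 1 (initialCutoff n R) :=
  contDiff_radialProduct (k := 1) (smoothTransition.contDiff.comp (by fun_prop)) contDiff_const

lemma differentiable_smoothTransition_mul_sub_one (b : ℝ) :
    Differentiable ℝ fun t => smoothTransition (b * t - 1) :=
  ((smoothTransition.contDiff (n := 1)).differentiable one_ne_zero).comp (by fun_prop)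

lemma contDiff_farCutoff : ContDiff ℝ 1 (farCutoff n R T) :=
  contDiff_radialProduct (k := 1) (contDiff_smoothStepDown.comp (contDiff_const.mul contDiff_id))
    (contDiff_smoothStepDown.comp (contDiff_const.mul contDiff_id))

lemma pdT_initialCutoff_nonneg (hR : 0 ≤ R) (p : Pt n) : 0 ≤ pdT (initialCutoff n R) p := by
  have hmono : Monotone fun t => smoothTransition (R * t - 1) := fun s t hst =>
    smoothTransition.monotone (by gcongr)
  rw [initialCutoff, pdT_radialProduct
    (differentiable_smoothTransition_mul_sub_one _ _) (differentiableAt_const _), mul_one]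
  exact hmono.deriv_nonneg

lemma spatialPart_fderiv_initialCutoff (p : Pt n) :
    spatialPart n (fderiv ℝ (initialCutoff n R) p) = 0 := by
  rw [initialCutoff, spatialPart_fderiv_radialProduct
    (differentiable_smoothTransition_mul_sub_one _ _) (differentiableAt_const _)]
  simp

lemma differentiable_smoothStepDown_mul (b : ℝ) :
    Differentiable ℝ fun s => smoothStepDown (b * s) :=
  ((contDiff_smoothStepDown (k := 1)).differentiable one_ne_zero).comp
    (differentiable_id.const_mul b)

lemma neg_pdT_farCutoff_le (hT : 0 < T) (hM : ∀ s, |deriv smoothStepDown s| ≤ M) (p : Pt n) :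
    -pdT (farCutoff n R T) p ≤ (cutoffCore n R T)ᶜ.indicator (fun _ => M / T) p := by
  rw [farCutoff, pdT_radialProduct (differentiable_smoothStepDown_mul _ _)
    (differentiable_smoothStepDown_mul _ _), deriv_comp_mul_left, smul_eq_mul]
  by_cases hp : p ∈ cutoffCore n R T
  · have hp1 : T⁻¹ * p.1 ≤ 1 / 3 := by
      rw [inv_mul_le_iff₀ hT]
      linarith [hp.1.2]
    simp [deriv_smoothStepDown_of_le hp1, hp]
  · rw [Set.indicator_of_mem (by exact hp)]
    set g := smoothStepDown ((R ^ 2)⁻¹ * ‖p.2‖ ^ 2)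
    calc -(T⁻¹ * deriv smoothStepDown (T⁻¹ * p.1) * g)
        ≤ T⁻¹ * |deriv smoothStepDown (T⁻¹ * p.1)| * g := by
          rw [← neg_mul, ← mul_neg]
          gcongr
          · exact smoothStepDown_nonneg _
          · exact neg_le_abs _
      _ ≤ T⁻¹ * M * 1 := by
          have hM0 : 0 ≤ M := (abs_nonneg _).trans (hM 0)
          gcongr
          · exact smoothStepDown_nonneg _
          · exact hM _
          · exact smoothStepDown_le_one _
      _ = M / T := by ring

lemma deriv_smoothStepDown_eq_zero_of_norm (hR : 0 < R) {x : Xn n}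
    (hx : ¬(R / 2 < ‖x‖ ∧ ‖x‖ < R)) : deriv smoothStepDown ((R ^ 2)⁻¹ * ‖x‖ ^ 2) = 0 := by
  have hR2 : 0 < R ^ 2 := by positivity
  rw [not_and_or, not_lt, not_lt] at hx
  rcases hx with hx | hx
  · have hsq : ‖x‖ ^ 2 ≤ (R / 2) ^ 2 := by gcongr
    refine deriv_smoothStepDown_of_le ?_
    rw [inv_mul_le_iff₀ hR2]
    linarith
  · have hsq : R ^ 2 ≤ ‖x‖ ^ 2 := by gcongr
    refine deriv_smoothStepDown_of_ge ?_
    rw [le_inv_mul_iff₀ hR2]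
    linarith

lemma spatialPart_fderiv_farCutoff (p : Pt n) :
    spatialPart n (fderiv ℝ (farCutoff n R T) p) = ((2 * smoothStepDown (T⁻¹ * p.1)
      * ((R ^ 2)⁻¹ * deriv smoothStepDown ((R ^ 2)⁻¹ * ‖p.2‖ ^ 2))) • p.2 : Xn n) := by
  rw [farCutoff, spatialPart_fderiv_radialProduct (differentiable_smoothStepDown_mul _ _)
    (differentiable_smoothStepDown_mul _ _), deriv_comp_mul_left, smul_eq_mul]

lemma exists_spatialPart_fderiv_farCutoff (hR : 0 < R) (hM : ∀ s, |deriv smoothStepDown s| ≤ M)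
    (p : Pt n) : ∃ ξ : Xn n, spatialPart n (fderiv ℝ (farCutoff n R T) p) = ξ ∧
      ‖ξ‖ ≤ 2 * M / R ∧ (¬(R / 2 < ‖p.2‖ ∧ ‖p.2‖ < R) → ξ = 0) := by
  refine ⟨_, spatialPart_fderiv_farCutoff p, ?_, fun hp => ?_⟩
  · have hM0 : 0 ≤ M := (abs_nonneg _).trans (hM 0)
    by_cases hp : R / 2 < ‖p.2‖ ∧ ‖p.2‖ < R
    · rw [norm_smul, norm_mul, norm_mul, norm_mul, Real.norm_two,
        Real.norm_of_nonneg (smoothStepDown_nonneg _), Real.norm_of_nonneg (by positivity)]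
      calc 2 * smoothStepDown (T⁻¹ * p.1) * ((R ^ 2)⁻¹ * ‖deriv smoothStepDown _‖) * ‖p.2‖
          ≤ 2 * 1 * ((R ^ 2)⁻¹ * M) * R := by
            gcongr
            · exact smoothStepDown_le_one _
            · exact hM _
            · exact hp.2.le
        _ = 2 * M / R := by field_simp
    · rw [deriv_smoothStepDown_eq_zero_of_norm hR hp, mul_zero, mul_zero, zero_smul, norm_zero]
      positivity
  · rw [deriv_smoothStepDown_eq_zero_of_norm hR hp, mul_zero, mul_zero, zero_smul]

lemma Cond8.ae_imp_le (hA : Cond8 A α c) (hR : 1 < R) :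
    ∀ᵐ p ∂volume.restrict (halfSpace n), R / 2 < ‖p.2‖ ∧ ‖p.2‖ < R → A p ≤ c * R ^ (2 - α) := by
  have hmeas : MeasurableSet {p : Pt n | 0 < p.1 ∧ R / 2 < ‖p.2‖ ∧ ‖p.2‖ < R} :=
    ((isOpen_halfSpace n).inter ((isOpen_lt continuous_const continuous_snd.norm).inter
      (isOpen_lt continuous_snd.norm continuous_const))).measurableSet
  filter_upwards [ae_restrict_of_ae ((ae_restrict_iff' hmeas).mp (hA R hR)),
    ae_restrict_mem (measurableSet_halfSpace n)] with p hAp hp hp2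
  exact hAp ⟨hp, hp2⟩

lemma coeffForm_farCutoff_le (hform : ∀ᵐ p ∂volume.restrict (halfSpace n), ∀ ξ : Xn n,
      ∑ i, ∑ j, a i j p * ξ i * ξ j ≤ A p * ‖ξ‖ ^ 2)
    (hA : Cond8 A α c) (hR : 1 < R) (hM : ∀ s, |deriv smoothStepDown s| ≤ M) :
    ∀ᵐ p ∂volume.restrict (halfSpace n),
      coeffForm a p (fderiv ℝ (farCutoff n R T) p) (fderiv ℝ (farCutoff n R T) p) ≤
        (cutoffCore n R T)ᶜ.indicator (fun _ => 4 * |c| * M ^ 2 / R ^ α) p := by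
  have hR0 : 0 < R := one_pos.trans hR
  filter_upwards [hform, hA.ae_imp_le hR] with p hform hAp
  obtain ⟨ξ, hξ, hξ_le, hξ_zero⟩ := exists_spatialPart_fderiv_farCutoff (T := T) hR0 hM p
  rw [coeffForm_apply, hξ]
  by_cases hp : R / 2 < ‖p.2‖ ∧ ‖p.2‖ < R
  · have hpcore : p ∈ (cutoffCore n R T)ᶜ := fun h =>
      (mem_closedBall_zero_iff.mp h.2).not_gt hp.1
    rw [Set.indicator_of_mem hpcore]
    calc ∑ i, ∑ j, a i j p * ξ i * ξ j ≤ A p * ‖ξ‖ ^ 2 := hform ξ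
      _ ≤ |c| * R ^ (2 - α) * (2 * M / R) ^ 2 := by
          gcongr
          exact (hAp hp).trans (by gcongr; exact le_abs_self c)
      _ = 4 * |c| * M ^ 2 / R ^ α := by
          rw [Real.rpow_sub hR0, Real.rpow_two]
          field_simp
          ring
  · rw [hξ_zero hp]
    simpa using Set.indicator_nonneg (fun _ _ => by positivity) p

lemma initialCutoff_eq_one (hR : 0 < R) (hp : p ∈ cutoffCore n R T) :
    initialCutoff n R p = 1 := by
  have hp1 : 2 ≤ p.1 * R := (div_le_iff₀ hR).mp hp.1.1
  rw [initialCutoff, radialProduct, smoothTransition.one_of_one_le (by linarith), mul_one]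

lemma farCutoff_eq_one (hR : 0 < R) (hT : 0 < T) (hp : p ∈ cutoffCore n R T) :
    farCutoff n R T p = 1 := by
  have hp1 : T⁻¹ * p.1 ≤ 1 / 3 := by
    rw [inv_mul_le_iff₀ hT]
    linarith [hp.1.2]
  have hp2 : (R ^ 2)⁻¹ * ‖p.2‖ ^ 2 ≤ 1 / 3 := by
    have hsq : ‖p.2‖ ^ 2 ≤ (R / 2) ^ 2 := by
      gcongr
      exact mem_closedBall_zero_iff.mp hp.2
    rw [inv_mul_le_iff₀ (by positivity)]
    linarith [sq_nonneg R]
  rw [farCutoff, radialProduct, smoothStepDown_eq_one hp1, smoothStepDown_eq_one hp2, mul_one]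

lemma initialCutoff_mul_farCutoff_eq_zero (hR : 0 < R) (hT : 0 < T) (hp : p ∉ cutoffBox n R T) :
    initialCutoff n R p * farCutoff n R T p = 0 := by
  contrapose! hp
  simp only [initialCutoff, farCutoff, radialProduct, mul_one, mul_ne_zero_iff] at hp
  obtain ⟨ht0, htT, hx⟩ := hp
  refine ⟨⟨?_, ?_⟩, mem_closedBall_zero_iff.mpr ?_⟩
  · rw [div_le_iff₀ hR]
    by_contra! hlt
    exact ht0 (smoothTransition.zero_of_nonpos (by linarith))
  · by_contra! hlt
    refine htT (smoothStepDown_eq_zero ?_)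
    rw [le_inv_mul_iff₀ hT]
    linarith
  · by_contra! hlt
    refine hx (smoothStepDown_eq_zero ?_)
    have hsq : R ^ 2 ≤ ‖p.2‖ ^ 2 := by gcongr
    rw [le_inv_mul_iff₀ (by positivity)]
    linarith [sq_nonneg R]

lemma measurableSet_cutoffCore : MeasurableSet (cutoffCore n R T) :=
  measurableSet_Icc.prod Metric.isClosed_closedBall.measurableSet

lemma cutoffBox_subset_halfSpace (hR : 0 < R) : cutoffBox n R T ⊆ halfSpace n :=
  fun _ hp => (one_div_pos.mpr hR).trans_le hp.1.1

lemma volume_cutoffBox_le (hR : 0 < R) (hT : 0 ≤ T) :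
    volume.real (cutoffBox n R T) ≤ T * (R ^ n * volume.real (Metric.ball (0 : Xn n) 1)) := by
  have hball : volume.real (Metric.closedBall (0 : Xn n) R) =
      R ^ n * volume.real (Metric.ball (0 : Xn n) 1) := by
    rw [Measure.real, Measure.addHaar_closedBall _ _ hR.le, finrank_euclideanSpace_fin,
      ENNReal.toReal_mul, ENNReal.toReal_ofReal (pow_nonneg hR.le n), Measure.real]
  rw [cutoffBox, Measure.volume_eq_prod, measureReal_prod_prod, hball, Real.volume_real_Icc]
  gcongr
  exact max_le (by linarith [one_div_pos.mpr hR]) hT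

lemma isCutoff_parabolic (hform : ∀ᵐ p ∂volume.restrict (halfSpace n), ∀ ξ : Xn n,
      ∑ i, ∑ j, a i j p * ξ i * ξ j ≤ A p * ‖ξ‖ ^ 2)
    (hA : Cond8 A α c) (hR : 1 < R) (hM : 0 < M) (hderiv : ∀ s, |deriv smoothStepDown s| ≤ M) :
    IsCutoff a ((M + 4 * |c| * M ^ 2) / R ^ α) (cutoffCore n R (R ^ α)) (cutoffBox n R (R ^ α))
      (initialCutoff n R) (farCutoff n R (R ^ α)) := by
  have hR0 : 0 < R := one_pos.trans hR
  have hT : 0 < R ^ α := Real.rpow_pos_of_pos hR0 α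
  have hcM : 0 ≤ 4 * |c| * M ^ 2 := by positivity
  exact {
    pos := by positivity
    measurableSet := measurableSet_cutoffCore
    isCompact := isCompact_Icc.prod (isCompact_closedBall _ _)
    subset_halfSpace := cutoffBox_subset_halfSpace hR0
    contDiff_left := contDiff_initialCutoff
    contDiff_right := contDiff_farCutoff
    nonneg_left := fun _ => mul_nonneg (smoothTransition.nonneg _) zero_le_one
    nonneg_right := fun _ => mul_nonneg (smoothStepDown_nonneg _) (smoothStepDown_nonneg _)
    le_one_left := fun _ => mul_le_one₀ (smoothTransition.le_one _) zero_le_one le_rfl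
    le_one_right := fun _ => mul_le_one₀ (smoothStepDown_le_one _) (smoothStepDown_nonneg _)
      (smoothStepDown_le_one _)
    eq_one_left := fun _ => initialCutoff_eq_one hR0
    eq_one_right := fun _ => farCutoff_eq_one hR0 hT
    mul_eq_zero := fun _ => initialCutoff_mul_farCutoff_eq_zero hR0 hT
    pdT_left_nonneg := pdT_initialCutoff_nonneg hR0.le
    spatialPart_left := spatialPart_fderiv_initialCutoff
    neg_pdT_right_le := fun p => (neg_pdT_farCutoff_le hT hderiv p).trans
      (Set.indicator_le_indicator (by gcongr; linarith))
    coeffForm_right_le := (coeffForm_farCutoff_le hform hA hR hderiv).mono fun _ hp => hp.trans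
      (Set.indicator_le_indicator (by gcongr; linarith)) }

lemma aecover_cutoffCore (n : ℕ) (hα : 0 < α) : AECover (volume.restrict (halfSpace n))
    Filter.atTop fun R : ℝ => cutoffCore n R (R ^ α) := by
  refine ⟨?_, fun R => measurableSet_cutoffCore⟩
  filter_upwards [ae_restrict_mem (measurableSet_halfSpace n)] with p (hp : 0 < p.1)
  filter_upwards [(tendsto_rpow_atTop hα).eventually_ge_atTop (3 * p.1),
    Filter.eventually_ge_atTop (2 / p.1), Filter.eventually_ge_atTop (2 * ‖p.2‖),
    Filter.eventually_gt_atTop 0] with R hT hR hx hR0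
  refine ⟨⟨?_, by linarith⟩, mem_closedBall_zero_iff.mpr (by linarith)⟩
  rwa [div_le_comm₀ hR0 hp]

lemma rpow_mul_volume_cutoffBox_le {k q : ℝ} (hk : 0 ≤ k) (hR : 1 < R) (hq : 1 < q)
    (hnα : n * (q - 1) ≤ α) :
    (k / R ^ α) ^ (q / (q - 1)) * volume.real (cutoffBox n R (R ^ α)) ≤
      k ^ (q / (q - 1)) * volume.real (Metric.ball (0 : Xn n) 1) := by
  have hR0 : 0 < R := one_pos.trans hR
  have hq1 : 0 < q - 1 := sub_pos.mpr hq
  have hexp : n + α - α * (q / (q - 1)) ≤ 0 := by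
    have hαq : α * (q / (q - 1)) = α + α / (q - 1) := by
      field_simp
      ring
    rw [hαq]
    linarith [(le_div_iff₀ hq1).mpr hnα]
  have hpow : R ^ α * R ^ n / (R ^ α) ^ (q / (q - 1)) ≤ 1 := by
    rw [← Real.rpow_natCast, ← Real.rpow_add hR0, ← Real.rpow_mul hR0.le, ← Real.rpow_sub hR0,
      add_comm α]
    exact Real.rpow_le_one_of_one_le_of_nonpos hR.le hexp
  calc (k / R ^ α) ^ (q / (q - 1)) * volume.real (cutoffBox n R (R ^ α))
      ≤ (k / R ^ α) ^ (q / (q - 1))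
          * (R ^ α * (R ^ n * volume.real (Metric.ball (0 : Xn n) 1))) := by
        gcongr
        exact volume_cutoffBox_le hR0 (by positivity)
    _ = k ^ (q / (q - 1)) * volume.real (Metric.ball (0 : Xn n) 1)
          * (R ^ α * R ^ n / (R ^ α) ^ (q / (q - 1))) := by
        rw [Real.div_rpow hk (by positivity)]
        ring
    _ ≤ k ^ (q / (q - 1)) * volume.real (Metric.ball (0 : Xn n) 1) :=
        mul_le_of_le_one_right (by positivity) hpow

end ParabolicCutoff

/-! ### The comparison principle -/

section Comparison

variable {n : ℕ} {a : Fin n → Fin n → Pt n → ℝ} {A : Pt n → ℝ} {α c q κ : ℝ}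

theorem IsNonnegSupersolution.eq_zero_of_cond8 {w : Pt n → ℝ}
    (hw : IsNonnegSupersolution a q κ w) (hκ : 0 < κ) (hα : 0 < α) (hq : 1 < q)
    (hnα : n * (q - 1) ≤ α) (ha : IsDegenerateElliptic a)
    (hform : ∀ᵐ p ∂volume.restrict (halfSpace n), ∀ ξ : Xn n,
      ∑ i, ∑ j, a i j p * ξ i * ξ j ≤ A p * ‖ξ‖ ^ 2)
    (hA : Cond8 A α c) : ∀ p ∈ halfSpace n, w p = 0 := by
  obtain ⟨M, hM, hderiv⟩ := exists_abs_deriv_smoothStepDown_le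
  have hR (j : ℕ) : (1 : ℝ) < j + 2 := by linarith [j.cast_nonneg (α := ℝ)]
  refine hw.eq_zero_of_isCutoff (B := ((M + 4 * |c| * M ^ 2) / κ) ^ (q / (q - 1))
      * volume.real (Metric.ball (0 : Xn n) 1)) hq ha hκ
    (fun j : ℕ => isCutoff_parabolic hform hA (hR j) hM hderiv)
    ((aecover_cutoffCore n hα).comp_tendsto
      (Filter.tendsto_atTop_add_const_right _ _ tendsto_natCast_atTop_atTop)) fun j => ?_
  rw [div_right_comm]
  exact rpow_mul_volume_cutoffBox_le (by positivity) (hR j) hq hnα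

lemma isDegenerateElliptic_of_measurable (hmeas : ∀ i j, Measurable (a i j))
    (hbdd : ∀ i j, ∀ K : Set (Pt n), IsCompact K → K ⊆ halfSpace n → ∃ M, ∀ p ∈ K, |a i j p| ≤ M)
    (hsymm : ∀ i j, ∀ᵐ p ∂volume.restrict (halfSpace n), a i j p = a j i p)
    (hnonneg : ∀ᵐ p ∂volume.restrict (halfSpace n), ∀ ξ : Xn n,
      0 ≤ ∑ i, ∑ j, a i j p * ξ i * ξ j) : IsDegenerateElliptic a := by
  refine ⟨fun i j => ⟨(hmeas i j).aestronglyMeasurable, hbdd i j⟩, ?_⟩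
  filter_upwards [ae_all_iff.mpr fun i => ae_all_iff.mpr (hsymm i), hnonneg] with p hsymm hnonneg
  exact isPosSemidef_coeffForm hsymm hnonneg

theorem fujita_comparison_super_sub_general (hα : 0 < α) (hq : 1 < q) (hnα : n * (q - 1) ≤ α)
    (ha : IsDegenerateElliptic a)
    (hform : ∀ᵐ p ∂volume.restrict (halfSpace n), ∀ ξ : Xn n,
      ∑ i, ∑ j, a i j p * ξ i * ξ j ≤ A p * ‖ξ‖ ^ 2)
    (hA : Cond8 A α c) {u v : Pt n → ℝ}
    (hu : ContDiffOn ℝ 1 u (halfSpace n)) (hv : ContDiffOn ℝ 1 v (halfSpace n))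
    (hsuper : WeakSuperSol a q u) (hsub : WeakSubSol a q v)
    (huv : ∀ p ∈ halfSpace n, v p ≤ u p) : ∀ p ∈ halfSpace n, u p = v p := by
  have hw := isNonnegSupersolution_sub hq ha hu hv hsuper hsub huv
  exact fun p hp => sub_eq_zero.mp
    (hw.eq_zero_of_cond8 (by positivity) hα hq hnα ha hform hA p hp)

end Comparison

/-- the Fujita comparison principle for the Cauchy problems, with
arbitrary (possibly different) initial data, for a super-solution `u` and a
sub-solution `v` (Theorem 5). -/
theorem fujita_comparison_super_sub
    (n : ℕ) (hn : 1 ≤ n) (α c q : ℝ) (hα : 0 < α) (hc : 0 < c)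
    (hq1 : 1 < q) (hq2 : q ≤ 1 + α / n)
    (a : Fin n → Fin n → Pt n → ℝ) (A : Pt n → ℝ)
    (ha_meas : ∀ i j, Measurable (a i j))
    (ha_locbdd : ∀ i j, ∀ K : Set (Pt n), IsCompact K → K ⊆ halfSpace n →
      ∃ M, ∀ p ∈ K, |a i j p| ≤ M)
    (ha_symm : ∀ i j, ∀ᵐ p ∂(volume.restrict (halfSpace n)), a i j p = a j i p)
    (hA_meas : Measurable A)
    (hA_nonneg : ∀ p, 0 ≤ A p)
    (hA_locbdd : ∀ K : Set (Pt n), IsCompact K → K ⊆ halfSpace n →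
      ∃ M, ∀ p ∈ K, A p ≤ M)
    (hform : ∀ᵐ p ∂(volume.restrict (halfSpace n)), ∀ ξ : Xn n,
      0 ≤ ∑ i, ∑ j, a i j p * ξ i * ξ j ∧
      ∑ i, ∑ j, a i j p * ξ i * ξ j ≤ A p * ‖ξ‖ ^ 2)
    (hcond8 : Cond8 A α c)
    (u v : Pt n → ℝ)
    -- `u` and `v` are continuous on `[0,∞) × ℝⁿ`; the initial data `u(0,·)`
    -- and `v(0,·)` may be different and are unrestricted
    (hu_cont : ContinuousOn u {p : Pt n | 0 ≤ p.1})
    (hv_cont : ContinuousOn v {p : Pt n | 0 ≤ p.1})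
    (hu : ContDiffOn ℝ 1 u (halfSpace n)) (hv : ContDiffOn ℝ 1 v (halfSpace n))
    (hu_int : LocallyIntegrableOn (fun p => |u p| ^ q) (halfSpace n) volume)
    (hv_int : LocallyIntegrableOn (fun p => |v p| ^ q) (halfSpace n) volume)
    (hsupersol : WeakSuperSol a q u)
    (hsubsol : WeakSubSol a q v)
    (huv : ∀ p ∈ halfSpace n, v p ≤ u p) :
    ∀ p ∈ halfSpace n, u p = v p := by
  have hnα : n * (q - 1) ≤ α := (le_div_iff₀' (Nat.cast_pos.mpr hn)).mp (by linarith)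
  exact fujita_comparison_super_sub_general hα hq1 hnα
    (isDegenerateElliptic_of_measurable ha_meas ha_locbdd ha_symm
      (hform.mono fun _ h ξ => (h ξ).1))
    (hform.mono fun _ h ξ => (h ξ).2) hcond8 hu hv hsupersol hsubsol huv
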